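/- There is a constant c > 0 such that for all d ≥ 2, the maximal number of facets of a 0-1 polytope in R^d satisfies G(d) ≥ (c · d / log d)^{d/4}. -/

import Mathlib

open MeasureTheory Set Filter
noncomputable section

/-- Euclidean space `ℝ^d`. -/
abbrev E (d : ℕ) := EuclideanSpace ℝ (Fin d)

/-- The vertex set `{0,1}^d` of the unit cube in `ℝ^d`. -/
def cube01 (d : ℕ) : Set (E d) := {x | ∀ i, x i = 0 ∨ x i = 1}

/-- The number of facets ((d-1)-dimensional exposed faces) of `P ⊆ ℝ^d`. -/
def numFacets (d : ℕ) (P : Set (E d)) : ℕ :=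
  Set.ncard {F : Set (E d) | F.Nonempty ∧ IsExposed ℝ P F ∧
    Module.finrank ℝ (vectorSpan ℝ F) = d - 1}

/-- `G(d)`: the maximal number of facets of a full-dimensional 0-1 polytope in `ℝ^d`. -/
def maxFacets01 (d : ℕ) : ℕ :=
  sSup {k | ∃ F : Finset (E d), (↑F : Set (E d)) ⊆ cube01 d ∧
    Module.finrank ℝ (vectorSpan ℝ ((↑F : Set (E d)))) = d ∧
    k = numFacets d (convexHull ℝ (↑F : Set (E d)))}

/-!
Work in `{-1, 1}^d`, carried to `{0, 1}^d` by an affine map, and let `A` be a random set of about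
`exp (R / 2) / 4` sign vectors. By exponential tilting, an open halfspace with a point `p` of small
coordinates on its boundary contains a proportion at least `exp (-‖p‖² / 2) / poly d` of all sign
vectors. The halfspaces have bounded VC dimension, so with high probability `A` meets all of those
with `‖p‖² < R - 20 log d`, and `conv A` contains all these `p`. On the other hand, if `‖y‖² = R`,
then only a proportion `exp (-R / 2)` of the sign vectors satisfies `⟪x, y⟫ ≥ ‖y‖²`, so at least
half of any finite family of such `y` lies outside `conv A`.

The segment from `0` to such a `y` crosses a facet, and all `y` that cross the same facet lie in a
ball of squared radius `20 log d`. Take for the `y` the points `η z` with `z ∈ [M, 2 M]^d` integral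
and `∑ i, z i ^ 2` constant, where `η ^ 2 = 20 log d / d`: by pigeonhole there are about `M ^ d` of
them, up to a polynomial factor, and a ball of squared radius `20 log d` contains at most `24 ^ d`.
The coordinates of the `y` are small enough when `M` is of order `(d / log d) ^ (1 / 4)`.
-/

/-- The facets of `P`: its nonempty exposed faces of codimension one, as counted by `numFacets`. -/
def facets {V : Type*} [NormedAddCommGroup V] [NormedSpace ℝ V] (P : Set V) : Set (Set V) :=
  {F | F.Nonempty ∧ IsExposed ℝ P F ∧
    Module.finrank ℝ (vectorSpan ℝ F) = Module.finrank ℝ V - 1}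

/-- The polar dual of `S` with respect to the centre `o`, inside the ambient inner product space.
Its extreme points are the normals of the facets of `convexHull ℝ S`. -/
def polarAt {V : Type*} [NormedAddCommGroup V] [InnerProductSpace ℝ V] (S : Set V) (o : V) :
    Set V :=
  {θ | ∀ s ∈ S, inner ℝ (s - o) θ ≤ 1}

section Facets

open scoped InnerProductSpace

variable {V : Type*} [NormedAddCommGroup V] [NormedSpace ℝ V]

-- An exposed face of a polytope is the convex hull of its extreme points, which are vertices.
lemma finite_setOf_isExposed_convexHull {S : Set V} (hS : S.Finite) :
    {F | IsExposed ℝ (convexHull ℝ S) F}.Finite := by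
  have hcompact : IsCompact (convexHull ℝ S) := hS.isCompact_convexHull ℝ
  have hconvex := convex_convexHull ℝ S
  refine hS.finite_subsets.of_injOn (f := extremePoints ℝ) (fun F hF => ?_)
    (fun F hF G hG hFG => ?_)
  · exact hF.isExtreme.extremePoints_subset_extremePoints.trans extremePoints_convexHull_subset
  · rw [← closure_convexHull_extremePoints (hF.isCompact hcompact) (hF.convex hconvex), hFG,
      closure_convexHull_extremePoints (hG.isCompact hcompact) (hG.convex hconvex)]

lemma finite_facets_convexHull {S : Set V} (hS : S.Finite) : (facets (convexHull ℝ S)).Finite :=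
  (finite_setOf_isExposed_convexHull hS).subset fun _ hF => hF.2.1

-- A functional with a maximum at an interior point vanishes, so the face it exposes is all of `P`.
lemma notMem_interior_of_mem_facets [FiniteDimensional ℝ V] [Nontrivial V] {P F : Set V} {x : V}
    (hF : F ∈ facets P) (hxF : x ∈ F) : x ∉ interior P := by
  intro hx
  obtain ⟨hne, hexp, hrank⟩ := hF
  obtain ⟨l, rfl⟩ := hexp hne
  have hmax : IsLocalMax l x :=
    Filter.mem_of_superset (mem_interior_iff_mem_nhds.1 hx) fun y hy => hxF.2 y hy
  have hl : l = 0 := hmax.hasFDerivAt_eq_zero l.hasFDerivAt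
  have hP : {y ∈ P | ∀ z ∈ P, l z ≤ l y} = P := by simp [hl]
  have hspan : vectorSpan ℝ P = ⊤ := by
    have hint : IsOpen (interior P) := isOpen_interior
    exact AffineSubspace.vectorSpan_eq_top_of_affineSpan_eq_top ℝ V V
      (top_unique ((hint.affineSpan_eq_top ⟨x, hx⟩).ge.trans
        (affineSpan_mono ℝ interior_subset)))
  rw [hP, hspan, finrank_top] at hrank
  have := Module.finrank_pos (R := ℝ) (M := V)
  omega

end Facets

section Polytope

open scoped InnerProductSpace

variable {V : Type*} [NormedAddCommGroup V] [InnerProductSpace ℝ V]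

lemma convexHull_subset_setOf_inner_lt {S : Set V} {θ : V} {a : ℝ} (h : ∀ s ∈ S, ⟪s, θ⟫_ℝ < a) :
    convexHull ℝ S ⊆ {x | ⟪x, θ⟫_ℝ < a} :=
  convexHull_min h (convex_halfSpace_lt ((innerₗ V).flip θ).isLinear a)

lemma notMem_convexHull_of_forall_inner_lt {S : Set V} {x θ : V}
    (h : ∀ s ∈ S, ⟪s, θ⟫_ℝ < ⟪x, θ⟫_ℝ) : x ∉ convexHull ℝ S :=
  fun hx => lt_irrefl ⟪x, θ⟫_ℝ (convexHull_subset_setOf_inner_lt h hx)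

lemma polarAt_convexHull (S : Set V) (o : V) : polarAt (convexHull ℝ S) o = polarAt S o := by
  refine Subset.antisymm (fun θ hθ s hs => hθ s (subset_convexHull ℝ S hs)) fun θ hθ x hx => ?_
  have hsub : convexHull ℝ S ⊆ {x | ⟪x, θ⟫_ℝ ≤ 1 + ⟪o, θ⟫_ℝ} := by
    refine convexHull_min (fun s hs => ?_) (convex_halfSpace_le ((innerₗ V).flip θ).isLinear _)
    have := hθ s hs
    rw [inner_sub_left] at this
    exact sub_le_iff_le_add.1 this
  rw [inner_sub_left]
  exact sub_le_iff_le_add.2 (hsub hx)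

lemma isClosed_polarAt (S : Set V) (o : V) : IsClosed (polarAt S o) := by
  simp only [polarAt, ofPred_forall]
  exact isClosed_biInter fun s _ => isClosed_le (by fun_prop) continuous_const

lemma isBounded_polarAt {S : Set V} {o : V} (ho : o ∈ interior (convexHull ℝ S)) :
    Bornology.IsBounded (polarAt S o) := by
  obtain ⟨r, hr, hball⟩ := Metric.nhds_basis_closedBall.mem_iff.1 (mem_interior_iff_mem_nhds.1 ho)
  refine isBounded_iff_forall_norm_le.2 ⟨r⁻¹, fun θ hθ => ?_⟩
  rcases eq_or_ne θ 0 with rfl | hθ0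
  · simpa using hr.le
  have hnorm : 0 < ‖θ‖ := norm_pos_iff.2 hθ0
  have hmem : o + (r / ‖θ‖) • θ ∈ convexHull ℝ S := hball <| by
    rw [mem_closedBall_iff_norm, add_sub_cancel_left, norm_smul, norm_div, norm_norm,
      Real.norm_of_nonneg hr.le, div_mul_cancel₀ _ hnorm.ne']
  rw [← polarAt_convexHull] at hθ
  have := hθ _ hmem
  rw [add_sub_cancel_left, real_inner_smul_left, real_inner_self_eq_norm_sq,
    show r / ‖θ‖ * ‖θ‖ ^ 2 = r * ‖θ‖ by field_simp] at this
  rwa [← one_div, le_div_iff₀' hr]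

lemma mem_convexHull_of_forall_mem_polarAt [CompleteSpace V] {S : Set V} {o b : V}
    (hS : IsClosed (convexHull ℝ S)) (ho : o ∈ convexHull ℝ S)
    (hb : ∀ θ ∈ polarAt S o, ⟪b - o, θ⟫_ℝ ≤ 1) : b ∈ convexHull ℝ S := by
  by_contra hbS
  obtain ⟨f, u, hfS, hfb⟩ :=
    geometric_hahn_banach_closed_point (convex_convexHull ℝ S) hS hbS
  obtain ⟨η, rfl⟩ := (InnerProductSpace.toDual ℝ V).surjective f
  simp only [InnerProductSpace.toDual_apply_apply, real_inner_comm _ η] at hfS hfb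
  have hgap : 0 < u - ⟪o, η⟫_ℝ := sub_pos.2 (hfS o ho)
  have hpolar : (u - ⟪o, η⟫_ℝ)⁻¹ • η ∈ polarAt S o := fun s hs => by
    rw [inner_smul_right, inner_sub_left, inv_mul_le_iff₀ hgap, mul_one]
    exact sub_le_sub_right (hfS s (subset_convexHull ℝ S hs)).le _
  have := hb _ hpolar
  rw [inner_smul_right, inner_sub_left, inv_mul_le_iff₀ hgap, mul_one] at this
  linarith

variable [FiniteDimensional ℝ V]

-- Otherwise `θ` could be moved both ways along a direction orthogonal to every tight constraint.
lemma span_tight_eq_top_of_mem_extremePoints_polarAt {S : Set V} (hS : S.Finite) {o θ : V}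
    (hθ : θ ∈ (polarAt S o).extremePoints ℝ) :
    Submodule.span ℝ ((· - o) '' {s ∈ S | ⟪s - o, θ⟫_ℝ = 1}) = ⊤ := by
  rw [← Submodule.orthogonal_eq_bot_iff, Submodule.eq_bot_iff]
  intro η hη
  have htight : ∀ s ∈ S, ⟪s - o, θ⟫_ℝ = 1 → ⟪s - o, η⟫_ℝ = 0 := fun s hs h =>
    (Submodule.mem_orthogonal _ _).1 hη _ (Submodule.subset_span ⟨s, ⟨hs, h⟩, rfl⟩)
  have hmove : ∀ᶠ ε : ℝ in nhds 0, θ + ε • η ∈ polarAt S o := by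
    refine (Filter.eventually_all_finite hS).2 fun s hs => ?_
    rcases (hθ.1 s hs).eq_or_lt with heq | hlt
    · refine Eventually.of_forall fun ε => le_of_eq ?_
      rw [inner_add_right, inner_smul_right, htight s hs heq, heq, mul_zero, add_zero]
    · have hcont : Continuous fun ε : ℝ => ⟪s - o, θ + ε • η⟫_ℝ := by fun_prop
      have hlt0 : ⟪s - o, θ + (0 : ℝ) • η⟫_ℝ < 1 := by rwa [zero_smul, add_zero]
      exact (hcont.continuousAt.eventually (gt_mem_nhds hlt0)).mono fun _ => le_of_lt
  obtain ⟨δ, hδ, hball⟩ := Metric.eventually_nhds_iff_ball.1 hmove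
  have hhalf : (δ / 2) • η = 0 := by
    have hpos := hball (δ / 2) (by simp [abs_of_pos hδ, hδ])
    have hneg := hball (-(δ / 2)) (by simp [abs_of_pos hδ, hδ])
    have hmid : θ ∈ openSegment ℝ (θ + (δ / 2) • η) (θ + (-(δ / 2)) • η) :=
      ⟨1 / 2, 1 / 2, by norm_num, by norm_num, by norm_num, by module⟩
    simpa using hθ.2 hpos hneg hmid
  exact (smul_eq_zero.1 hhalf).resolve_left (by positivity)

lemma mem_facets_of_span_tight_eq_top {S : Set V} {o θ b : V} (hθ : θ ∈ polarAt S o)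
    (hspan : Submodule.span ℝ ((· - o) '' {s ∈ S | ⟪s - o, θ⟫_ℝ = 1}) = ⊤)
    (hb : b ∈ convexHull ℝ S) (hbθ : ⟪b - o, θ⟫_ℝ = 1) :
    {x ∈ convexHull ℝ S | ⟪x - o, θ⟫_ℝ = 1} ∈ facets (convexHull ℝ S) := by
  set F := {x ∈ convexHull ℝ S | ⟪x - o, θ⟫_ℝ = 1}
  have hle : ∀ x ∈ convexHull ℝ S, ⟪x - o, θ⟫_ℝ ≤ 1 := by rwa [← polarAt_convexHull] at hθ
  have hproper : vectorSpan ℝ F ≠ ⊤ := by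
    intro htop
    have hsub : vectorSpan ℝ F ≤ (ℝ ∙ θ)ᗮ := by
      refine Submodule.span_le.2 ?_
      rintro _ ⟨x, hx, y, hy, rfl⟩
      refine Submodule.mem_orthogonal_singleton_iff_inner_left.2 ?_
      simp only [vsub_eq_sub]
      rw [← sub_sub_sub_cancel_right x y o, inner_sub_left, hx.2, hy.2, sub_self]
    have hb_orth := Submodule.mem_orthogonal_singleton_iff_inner_left.1
      (hsub (htop ▸ Submodule.mem_top : b - o ∈ vectorSpan ℝ F))
    linarith
  have hsup : vectorSpan ℝ F ⊔ ℝ ∙ (b - o) = ⊤ := by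
    refine top_unique (hspan ▸ Submodule.span_le.2 ?_)
    rintro _ ⟨s, ⟨hs, hsθ⟩, rfl⟩
    change s - o ∈ _
    rw [← sub_add_sub_cancel s b o]
    exact Submodule.add_mem_sup
      (vsub_mem_vectorSpan ℝ ⟨subset_convexHull ℝ S hs, hsθ⟩ ⟨hb, hbθ⟩)
      (Submodule.mem_span_singleton_self _)
  refine ⟨⟨b, hb, hbθ⟩, fun _ => ⟨innerSL ℝ θ, Set.ext fun x => and_congr_right fun hx => ?_⟩, ?_⟩
  · simp only [innerSL_apply_apply, real_inner_comm _ θ]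
    simp only [inner_sub_left] at hbθ hle ⊢
    exact ⟨fun h z hz => by linarith [hle z hz], fun h => by linarith [h b hb, hle x hx]⟩
  · have hlt := Submodule.finrank_lt hproper
    have hadd := Submodule.finrank_add_le_finrank_add_finrank (vectorSpan ℝ F) (ℝ ∙ (b - o))
    have hb0 : b - o ≠ 0 := fun h => by simp [h] at hbθ
    have hone := finrank_span_singleton (K := ℝ) hb0
    rw [hsup, finrank_top] at hadd
    omega

lemma exists_mem_facets_lineMap_mem {S : Set V} (hS : S.Finite) {o w : V}
    (ho : o ∈ interior (convexHull ℝ S)) (hw : w ∉ convexHull ℝ S) :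
    ∃ F ∈ facets (convexHull ℝ S), ∃ t ∈ Icc (0 : ℝ) 1, AffineMap.lineMap o w t ∈ F := by
  have hclosed : IsClosed (convexHull ℝ S) := (hS.isCompact_convexHull ℝ).isClosed
  have hpolar : IsCompact (polarAt S o) :=
    Metric.isCompact_of_isClosed_isBounded (isClosed_polarAt S o) (isBounded_polarAt ho)
  obtain ⟨θ, hmax, hext⟩ : ∃ θ, (∀ η ∈ polarAt S o, ⟪w - o, η⟫_ℝ ≤ ⟪w - o, θ⟫_ℝ) ∧
      θ ∈ (polarAt S o).extremePoints ℝ := by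
    have hexp : IsExposed ℝ (polarAt S o) ((innerSL ℝ (w - o)).toExposed (polarAt S o)) :=
      ContinuousLinearMap.toExposed.isExposed
    obtain ⟨θ₀, hθ₀, hmax₀⟩ := hpolar.exists_isMaxOn ⟨0, fun s _ => by simp⟩
      (innerSL ℝ (w - o)).continuous.continuousOn
    obtain ⟨θ, hθ⟩ := (hexp.isCompact hpolar).extremePoints_nonempty ⟨θ₀, hθ₀, fun η hη => hmax₀ hη⟩
    exact ⟨θ, hθ.1.2, hexp.isExtreme.extremePoints_subset_extremePoints hθ⟩
  set m := ⟪w - o, θ⟫_ℝ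
  have hm : 1 < m := by
    by_contra! hle
    exact hw (mem_convexHull_of_forall_mem_polarAt hclosed (interior_subset ho)
      fun η hη => (hmax η hη).trans hle)
  have hm0 : 0 < m := one_pos.trans hm
  have hsub : AffineMap.lineMap o w m⁻¹ - o = m⁻¹ • (w - o) := by simp [AffineMap.lineMap_apply]
  have hmem : AffineMap.lineMap o w m⁻¹ ∈ convexHull ℝ S :=
    mem_convexHull_of_forall_mem_polarAt hclosed (interior_subset ho) fun η hη => by
      rw [hsub, real_inner_smul_left, inv_mul_le_iff₀ hm0, mul_one]
      exact hmax η hη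
  have htight : ⟪AffineMap.lineMap o w m⁻¹ - o, θ⟫_ℝ = 1 := by
    rw [hsub, real_inner_smul_left, inv_mul_cancel₀ hm0.ne']
  exact ⟨_, mem_facets_of_span_tight_eq_top hext.1
    (span_tight_eq_top_of_mem_extremePoints_polarAt hS hext) hmem htight,
    m⁻¹, ⟨by positivity, inv_le_one_of_one_le₀ hm.le⟩, hmem, htight⟩

lemma facets_convexHull_nonempty [Nontrivial V] {S : Set V} (hS : S.Finite)
    (hint : (interior (convexHull ℝ S)).Nonempty) : (facets (convexHull ℝ S)).Nonempty := by
  obtain ⟨o, ho⟩ := hint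
  have hne : convexHull ℝ S ≠ univ := (hS.isCompact_convexHull ℝ).ne_univ
  obtain ⟨w, hw⟩ := (ne_univ_iff_exists_notMem _).1 hne
  obtain ⟨F, hF, -⟩ := exists_mem_facets_lineMap_mem hS ho hw
  exact ⟨F, hF⟩

lemma mem_interior_convexHull_of_forall_exists_inner_lt [Nontrivial V] {S : Set V} {x : V}
    (h : ∀ θ ≠ 0, ∃ s ∈ S, ⟪x, θ⟫_ℝ < ⟪s, θ⟫_ℝ) : x ∈ interior (convexHull ℝ S) := by
  have : S.Nonempty := by
    obtain ⟨θ, hθ⟩ := exists_ne (0 : V)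
    exact (h θ hθ).imp fun s hs => hs.1
  have hspan : affineSpan ℝ S = ⊤ := by
    rw [AffineSubspace.affineSpan_eq_top_iff_vectorSpan_eq_top_of_nontrivial,
      ← Submodule.orthogonal_eq_bot_iff, Submodule.eq_bot_iff]
    intro θ hθ
    by_contra hθ0
    obtain ⟨s, hs, hxs⟩ := h θ hθ0
    obtain ⟨s', hs', hxs'⟩ := h (-θ) (neg_ne_zero.2 hθ0)
    have horth := (Submodule.mem_orthogonal _ _).1 hθ _ (vsub_mem_vectorSpan ℝ hs hs')
    rw [vsub_eq_sub, inner_sub_left] at horth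
    rw [inner_neg_right, inner_neg_right] at hxs'
    linarith
  by_contra hx
  obtain ⟨f, hf0, hf⟩ := geometric_hahn_banach_of_nonempty_interior_point
    (convex_convexHull ℝ S) hx (interior_convexHull_nonempty_iff_affineSpan_eq_top.2 hspan)
  obtain ⟨θ, rfl⟩ := (InnerProductSpace.toDual ℝ V).surjective f
  obtain ⟨s, hs, hxs⟩ := h θ (by rintro rfl; exact hf0 (map_zero _))
  have := hf s (subset_convexHull ℝ S hs)
  simp only [InnerProductSpace.toDual_apply_apply, real_inner_comm _ θ] at this
  linarith

end Polytope

section FacetCounting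

open scoped InnerProductSpace

variable {V : Type*} [NormedAddCommGroup V] [InnerProductSpace ℝ V]

lemma exists_norm_sub_sq_le_of_smul_mem [CompleteSpace V] {K : Set V} (hne : K.Nonempty)
    (hclosed : IsClosed K) (hconvex : Convex ℝ K) :
    ∃ p ∈ K, ∀ y, ∀ t ∈ Icc (0 : ℝ) 1, t • y ∈ K → ‖y - p‖ ^ 2 ≤ ‖y‖ ^ 2 - ‖p‖ ^ 2 := by
  obtain ⟨p, hpK, hp⟩ := exists_norm_eq_iInf_of_complete_convex hne hclosed.isComplete hconvex 0
  refine ⟨p, hpK, fun y t ht hty => ?_⟩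
  have hinner := (norm_eq_iInf_iff_real_inner_le_zero hconvex hpK).1 hp _ hty
  rw [zero_sub, inner_neg_left, inner_sub_right, inner_smul_right, real_inner_self_eq_norm_sq,
    real_inner_comm] at hinner
  have hpy : ‖p‖ ^ 2 ≤ ⟪y, p⟫_ℝ := by
    rcases le_or_gt 0 ⟪y, p⟫_ℝ with hy | hy
    · linarith [mul_le_of_le_one_left hy ht.2]
    · have hp0 : ‖p‖ ^ 2 ≤ 0 := by linarith [mul_nonpos_of_nonneg_of_nonpos ht.1 hy.le]
      have hp0' : p = 0 := by simpa using hp0.antisymm (sq_nonneg _)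
      simp [hp0'] at hy
  rw [norm_sub_sq_real]
  linarith

variable [FiniteDimensional ℝ V] {W : Type*} [NormedAddCommGroup W] [InnerProductSpace ℝ W]
  [FiniteDimensional ℝ W] [Nontrivial W]

/- The segment from `φ 0` to `φ (y z)` crosses a facet. All `y z` crossing the same facet `F` lie
within `√(R - ρ)` of the point of smallest norm of `φ ⁻¹' F ∩ B`. -/
lemma card_le_mul_ncard_facets {κ : Type*} {S : Set W} (hS : S.Finite) (φ : V →ᵃ[ℝ] W) {B : Set V}
    (hBclosed : IsClosed B) (hBconvex : Convex ℝ B) (hB0 : 0 ∈ B) {ρ R : ℝ} (hρ : 0 < ρ)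
    (hdrop : ∀ p ∈ B, ‖p‖ ^ 2 < ρ → φ p ∈ interior (convexHull ℝ S))
    {Y : Finset κ} {y : κ → V} (hyB : ∀ z ∈ Y, y z ∈ B) (hyR : ∀ z ∈ Y, ‖y z‖ ^ 2 = R)
    (hy : ∀ z ∈ Y, φ (y z) ∉ convexHull ℝ S) {N : ℕ}
    (hN : ∀ (c : V) (X : Finset κ), X ⊆ Y → (∀ z ∈ X, ‖y z - c‖ ^ 2 ≤ R - ρ) → X.card ≤ N) :
    Y.card ≤ N * (facets (convexHull ℝ S)).ncard := by
  classical
  have hexit : ∀ z ∈ Y, ∃ F ∈ facets (convexHull ℝ S), ∃ t ∈ Icc (0 : ℝ) 1, φ (t • y z) ∈ F := by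
    intro z hz
    obtain ⟨F, hF, t, ht, hmem⟩ :=
      exists_mem_facets_lineMap_mem hS (hdrop 0 hB0 (by simpa using hρ)) (hy z hz)
    rw [← AffineMap.apply_lineMap, AffineMap.lineMap_apply_module, smul_zero, zero_add] at hmem
    exact ⟨F, hF, t, ht, hmem⟩
  choose! facet hfacet t ht htmem using hexit
  have hfiber : ∀ F ∈ Y.image facet, (Y.filter (facet · = F)).card ≤ N := by
    intro F hF
    obtain ⟨z₀, hz₀, rfl⟩ := Finset.mem_image.1 hF
    have hF := hfacet z₀ hz₀
    have hFclosed : IsClosed (facet z₀) := hF.2.1.isClosed (hS.isCompact_convexHull ℝ).isClosed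
    have hFconvex : Convex ℝ (facet z₀) := hF.2.1.convex (convex_convexHull ℝ S)
    have hK : ∀ z ∈ Y, facet z = facet z₀ → t z • y z ∈ φ ⁻¹' facet z₀ ∩ B := fun z hz hzF =>
      ⟨hzF ▸ htmem z hz, hBconvex.smul_mem_of_zero_mem hB0 (hyB z hz) (ht z hz)⟩
    obtain ⟨p, ⟨hpF, hpB⟩, hp⟩ := exists_norm_sub_sq_le_of_smul_mem ⟨_, hK z₀ hz₀ rfl⟩
      ((hFclosed.preimage φ.continuous_of_finiteDimensional).inter hBclosed)
      ((hFconvex.affine_preimage φ).inter hBconvex)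
    have hpρ : ρ ≤ ‖p‖ ^ 2 :=
      not_lt.1 fun hlt => notMem_interior_of_mem_facets hF hpF (hdrop p hpB hlt)
    refine hN p _ (Finset.filter_subset _ _) fun z hz => ?_
    obtain ⟨hzY, hzF⟩ := Finset.mem_filter.1 hz
    linarith [hp (y z) (t z) (ht z hzY) (hK z hzY hzF), hyR z hzY]
  calc Y.card ≤ N * (Y.image facet).card := Finset.card_le_mul_card_image Y N hfiber
    _ ≤ N * (facets (convexHull ℝ S)).ncard := by
      rw [← ncard_coe_finset]
      gcongr
      · exact finite_facets_convexHull hS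
      · rw [Finset.coe_image]
        exact image_subset_iff.2 hfacet

end FacetCounting

section Packing

lemma hasSum_half_pow_natAbs : HasSum (fun k : ℤ => (1 / 2 : ℝ) ^ k.natAbs) 3 := by
  have hneg : HasSum (fun n : ℕ => (1 / 2 : ℝ) ^ (-((n : ℤ) + 1)).natAbs) 1 := by
    have := hasSum_geometric_two.mul_left (1 / 2 : ℝ)
    rw [one_div_mul_cancel two_ne_zero] at this
    refine this.congr_fun ?_
    intro n
    rw [← pow_succ']
    congr 1
  rw [show (3 : ℝ) = 2 + 1 by norm_num]
  exact HasSum.of_nat_of_neg_add_one (by simpa using hasSum_geometric_two) hneg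

variable {ι : Type*} [Fintype ι]

lemma sum_half_pow_natAbs_sub_le (m : ι → ℤ) (Z : Finset (ι → ℤ)) :
    ∑ z ∈ Z, (1 / 2 : ℝ) ^ (∑ i, (z i - m i).natAbs) ≤ 3 ^ Fintype.card ι := by
  classical
  have hone (i : ι) (s : Finset ℤ) : ∑ k ∈ s, (1 / 2 : ℝ) ^ (k - m i).natAbs ≤ 3 := by
    have hinj : Function.Injective (· - m i) := sub_left_injective
    rw [← Finset.sum_image (f := fun k : ℤ => (1 / 2 : ℝ) ^ k.natAbs) hinj.injOn]
    exact sum_le_hasSum _ (fun _ _ => by positivity) hasSum_half_pow_natAbs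
  calc ∑ z ∈ Z, (1 / 2 : ℝ) ^ (∑ i, (z i - m i).natAbs)
      ≤ ∑ z ∈ Fintype.piFinset fun i => Z.image (· i), (1 / 2 : ℝ) ^ (∑ i, (z i - m i).natAbs) := by
        refine Finset.sum_le_sum_of_subset_of_nonneg (fun z hz => ?_) fun _ _ _ => by positivity
        exact Fintype.mem_piFinset.2 fun i => Finset.mem_image_of_mem _ hz
    _ = ∏ i, ∑ k ∈ Z.image (· i), (1 / 2 : ℝ) ^ (k - m i).natAbs := by
        simp_rw [Finset.prod_univ_sum, Finset.prod_pow_eq_pow_sum]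
    _ ≤ ∏ _i : ι, 3 := Finset.prod_le_prod (fun _ _ => by positivity) fun i _ => hone i _
    _ = 3 ^ Fintype.card ι := Finset.prod_const _

-- A point of the ball has `ℓ¹` distance at most `3 * card ι` to the integer part of the centre.
lemma card_le_of_forall_sum_sub_sq_le (c : ι → ℝ) {Z : Finset (ι → ℤ)}
    (hZ : ∀ z ∈ Z, ∑ i, ((z i : ℝ) - c i) ^ 2 ≤ Fintype.card ι) :
    Z.card ≤ 24 ^ Fintype.card ι := by
  set n := Fintype.card ι
  have hcoord (k : ℤ) (x : ℝ) : ((k - ⌊x⌋).natAbs : ℝ) ≤ (k - x) ^ 2 + 2 := by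
    rw [Nat.cast_natAbs, Int.cast_abs, Int.cast_sub, abs_le]
    have := Int.floor_le x
    have := Int.lt_floor_add_one x
    constructor <;> nlinarith [sq_nonneg (k - x - 1), sq_nonneg (k - x + 1)]
  have hdist : ∀ z ∈ Z, ∑ i, (z i - ⌊c i⌋).natAbs ≤ 3 * n := by
    intro z hz
    have : ∑ i, ((z i - ⌊c i⌋).natAbs : ℝ) ≤ 3 * n :=
      calc ∑ i, ((z i - ⌊c i⌋).natAbs : ℝ)
          ≤ ∑ i, (((z i : ℝ) - c i) ^ 2 + 2) := Finset.sum_le_sum fun i _ => hcoord _ _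
        _ = ∑ i, ((z i : ℝ) - c i) ^ 2 + n * 2 := by
          rw [Finset.sum_add_distrib, Finset.sum_const, Finset.card_univ, nsmul_eq_mul]
        _ ≤ 3 * n := by linarith [hZ z hz]
    exact_mod_cast this
  have hweight : (Z.card : ℝ) * (1 / 2) ^ (3 * n) ≤ 3 ^ n :=
    calc (Z.card : ℝ) * (1 / 2) ^ (3 * n) = ∑ _z ∈ Z, (1 / 2 : ℝ) ^ (3 * n) := by
          rw [Finset.sum_const, nsmul_eq_mul]
      _ ≤ ∑ z ∈ Z, (1 / 2 : ℝ) ^ (∑ i, (z i - ⌊c i⌋).natAbs) := Finset.sum_le_sum fun z hz =>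
          pow_le_pow_of_le_one (by norm_num) (by norm_num) (hdist z hz)
      _ ≤ 3 ^ n := sum_half_pow_natAbs_sub_le _ Z
  have h24 : (24 : ℝ) ^ n * (1 / 2) ^ (3 * n) = 3 ^ n := by
    rw [pow_mul, ← mul_pow]
    norm_num
  rw [← h24] at hweight
  exact_mod_cast le_of_mul_le_mul_right hweight (by positivity)

end Packing

section RealInequalities

lemma log_one_add_le_cubic {y : ℝ} (hy : -1 < y) :
    Real.log (1 + y) ≤ y - y ^ 2 / 2 + y ^ 3 / 3 := by
  let f : ℝ → ℝ := fun x => x - x ^ 2 / 2 + x ^ 3 / 3 - Real.log (1 + x)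
  have hderiv : ∀ x : ℝ, -1 < x → HasDerivAt f (x ^ 3 / (1 + x)) x := by
    intro x hx
    have hx0 : 1 + x ≠ 0 := by linarith
    refine ((((hasDerivAt_id x).sub ((hasDerivAt_pow 2 x).div_const 2)).add
      ((hasDerivAt_pow 3 x).div_const 3)).sub
      (((hasDerivAt_id x).const_add 1).log hx0)).congr_deriv ?_
    simp only [id]
    push_cast
    field_simp
    ring
  have hmin : IsMinOn f (Ioi (-1)) 0 := by
    refine isMinOn_Ioi_of_deriv (hderiv 0 (by norm_num)).continuousAt
      (fun x hx => (hderiv x hx.1).differentiableAt.differentiableWithinAt)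
      (fun x hx => (hderiv x (neg_one_lt_zero.trans hx)).differentiableAt.differentiableWithinAt)
      (fun x hx => ?_) (fun x hx => ?_)
    · rw [(hderiv x hx.1).deriv]
      exact div_nonpos_of_nonpos_of_nonneg ((Odd.pow_nonpos_iff (by decide)).2 hx.2.le)
        (by linarith [hx.1])
    · have hx0 : 0 < x := hx
      rw [(hderiv x (neg_one_lt_zero.trans hx)).deriv]
      positivity
  have hle := hmin (show y ∈ Ioi (-1) from hy)
  simp only [f, mem_ofPred_eq, add_zero, Real.log_one] at hle
  linarith

-- Convexity of `exp` at `±t - log (1 ± y)` with weights `(1 ± y) / 2`.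
lemma exp_mul_sub_le_cosh (t : ℝ) {y : ℝ} (hy : |y| < 1) :
    Real.exp (t * y - (y ^ 2 / 2 + y ^ 4 / 3)) ≤ Real.cosh t := by
  obtain ⟨hneg, hpos⟩ := abs_lt.1 hy
  have hplus : 0 < 1 + y := by linarith
  have hminus : 0 < 1 - y := by linarith
  have hlog₁ := mul_le_mul_of_nonneg_left (log_one_add_le_cubic hneg) hplus.le
  have hlog₂ := mul_le_mul_of_nonneg_left (log_one_add_le_cubic (neg_lt_neg hpos)) hminus.le
  rw [← sub_eq_add_neg] at hlog₂
  calc Real.exp (t * y - (y ^ 2 / 2 + y ^ 4 / 3))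
      ≤ Real.exp ((1 + y) / 2 * (t - Real.log (1 + y))
          + (1 - y) / 2 * (-t - Real.log (1 - y))) := Real.exp_le_exp.2 (by linarith)
    _ ≤ (1 + y) / 2 * Real.exp (t - Real.log (1 + y))
          + (1 - y) / 2 * Real.exp (-t - Real.log (1 - y)) :=
        convexOn_exp.2 (mem_univ _) (mem_univ _) (by positivity) (by positivity) (by ring)
    _ = Real.cosh t := by
        rw [Real.exp_sub, Real.exp_sub, Real.exp_log hplus, Real.exp_log hminus, Real.cosh_eq]
        field_simp

end RealInequalities

/-- The vertex of the cube `{-1, 1}^ι` whose coordinate `i` is `1` if `σ i` holds and `-1`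
otherwise. Sign vectors are indexed by `ι → Bool`, so that the cube is a finite type. -/
def signVec {ι : Type*} (σ : ι → Bool) : EuclideanSpace ℝ ι :=
  WithLp.toLp 2 fun i => if σ i then 1 else -1

/-- The weight of the sign vector `σ` under the exponential tilt by `θ` of the uniform measure on
`{-1, 1}^ι`, a probability measure under which half of the mass can be put beyond a hyperplane. -/
def tiltWeight {ι : Type*} [Fintype ι] [DecidableEq ι] (θ : EuclideanSpace ℝ ι)
    (σ : ι → Bool) : ℝ :=
  Real.exp (inner ℝ (signVec σ) θ) / ∑ τ : ι → Bool, Real.exp (inner ℝ (signVec τ) θ)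

section SignVectors

open scoped InnerProductSpace

variable {ι : Type*}

lemma signVec_apply (σ : ι → Bool) (i : ι) : signVec σ i = if σ i then 1 else -1 := rfl

lemma abs_signVec_apply (σ : ι → Bool) (i : ι) : |signVec σ i| = 1 := by
  rw [signVec_apply]
  split_ifs <;> norm_num

lemma signVec_apply_eq_neg_of_ne {σ τ : ι → Bool} {i : ι} (h : σ i ≠ τ i) :
    signVec τ i = -signVec σ i := by
  rw [signVec_apply, signVec_apply, Bool.eq_not.2 h.symm]
  cases σ i <;> simp

lemma signVec_piecewise_add [DecidableEq ι] (s : Finset ι) (σ τ : ι → Bool) :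
    signVec (s.piecewise σ τ) + signVec (s.piecewise τ σ) = signVec σ + signVec τ := by
  ext i
  by_cases hi : i ∈ s
  · simp [signVec_apply, hi]
  · simp [signVec_apply, hi, add_comm]

variable [Fintype ι]

lemma inner_signVec (σ : ι → Bool) (θ : EuclideanSpace ℝ ι) :
    ⟪signVec σ, θ⟫_ℝ = ∑ i, signVec σ i * θ i := by
  simp only [PiLp.inner_apply, RCLike.inner_apply, conj_trivial, mul_comm]

lemma exists_inner_lt_inner_signVec {p θ : EuclideanSpace ℝ ι} (hp : ∀ i, |p i| < 1)
    (hθ : θ ≠ 0) : ∃ σ : ι → Bool, ⟪p, θ⟫_ℝ < ⟪signVec σ, θ⟫_ℝ := by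
  obtain ⟨j, hj⟩ : ∃ j, θ j ≠ 0 := by
    by_contra! h
    exact hθ (PiLp.ext h)
  refine ⟨fun i => 0 < θ i, ?_⟩
  have hsign : ∀ i, signVec (fun i => decide (0 < θ i)) i * θ i = |θ i| := fun i => by
    rcases lt_or_ge 0 (θ i) with h | h
    · simp [signVec_apply, h, abs_of_pos h]
    · simp [signVec_apply, h.not_gt, abs_of_nonpos h]
  have hle : ∀ i, θ i * p i ≤ |p i| * |θ i| := fun i => by
    rw [mul_comm, ← abs_mul]
    exact le_abs_self _
  rw [inner_signVec]
  simp only [PiLp.inner_apply, RCLike.inner_apply, conj_trivial, hsign]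
  refine Finset.sum_lt_sum (fun i _ => (hle i).trans ?_)
    ⟨j, Finset.mem_univ j, (hle j).trans_lt ?_⟩
  · exact mul_le_of_le_one_left (abs_nonneg _) (hp i).le
  · exact mul_lt_of_lt_one_left (abs_pos.2 hj) (hp j)

variable [DecidableEq ι]

lemma sum_exp_inner_signVec (θ : EuclideanSpace ℝ ι) :
    ∑ σ : ι → Bool, Real.exp ⟪signVec σ, θ⟫_ℝ = ∏ i, (2 * Real.cosh (θ i)) := by
  simp_rw [inner_signVec, Real.exp_sum, signVec_apply]
  rw [← Fintype.prod_sum fun i b => Real.exp ((if b = true then 1 else -1) * θ i)]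
  refine Finset.prod_congr rfl fun i _ => ?_
  rw [Fintype.sum_bool, Real.cosh_eq]
  simp only [if_true, Bool.false_eq_true, if_false, one_mul, neg_one_mul]
  ring

lemma card_norm_sq_le_inner_signVec_le (y : EuclideanSpace ℝ ι) :
    (Finset.card {σ : ι → Bool | ‖y‖ ^ 2 ≤ ⟪signVec σ, y⟫_ℝ} : ℝ) ≤
      Real.exp (-‖y‖ ^ 2 / 2) * 2 ^ Fintype.card ι := by
  have hmarkov : (Finset.card {σ : ι → Bool | ‖y‖ ^ 2 ≤ ⟪signVec σ, y⟫_ℝ} : ℝ) *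
      Real.exp (‖y‖ ^ 2) ≤ ∑ σ : ι → Bool, Real.exp ⟪signVec σ, y⟫_ℝ := by
    rw [← nsmul_eq_mul]
    refine (Finset.card_nsmul_le_sum _ _ _ fun σ hσ => ?_).trans
      (Finset.sum_le_sum_of_subset_of_nonneg (Finset.filter_subset _ _)
        fun σ _ _ => (Real.exp_pos ⟪signVec σ, y⟫_ℝ).le)
    exact Real.exp_le_exp.2 (Finset.mem_filter.1 hσ).2
  have hmgf : ∑ σ : ι → Bool, Real.exp ⟪signVec σ, y⟫_ℝ ≤
      2 ^ Fintype.card ι * Real.exp (‖y‖ ^ 2 / 2) := by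
    rw [sum_exp_inner_signVec, EuclideanSpace.real_norm_sq_eq, Finset.sum_div, Real.exp_sum,
      Finset.prod_mul_distrib, Finset.prod_const, Finset.card_univ]
    gcongr
    exact Real.cosh_le_exp_half_sq _
  have hexp : Real.exp (-‖y‖ ^ 2 / 2) * Real.exp (‖y‖ ^ 2) = Real.exp (‖y‖ ^ 2 / 2) := by
    rw [← Real.exp_add]
    ring_nf
  refine le_of_mul_le_mul_right (hmarkov.trans (hmgf.trans_eq ?_)) (Real.exp_pos _)
  rw [← hexp]
  ring

lemma two_pow_mul_exp_le_sum_exp_inner_signVec {p : EuclideanSpace ℝ ι} (hp : ∀ i, |p i| < 1)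
    (θ : EuclideanSpace ℝ ι) :
    2 ^ Fintype.card ι * Real.exp (⟪p, θ⟫_ℝ - (‖p‖ ^ 2 / 2 + (∑ i, p i ^ 4) / 3)) ≤
      ∑ σ : ι → Bool, Real.exp ⟪signVec σ, θ⟫_ℝ := by
  have hsum : ⟪p, θ⟫_ℝ - (‖p‖ ^ 2 / 2 + (∑ i, p i ^ 4) / 3) =
      ∑ i, (θ i * p i - (p i ^ 2 / 2 + p i ^ 4 / 3)) := by
    rw [Finset.sum_sub_distrib, Finset.sum_add_distrib, ← Finset.sum_div, ← Finset.sum_div,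
      EuclideanSpace.real_norm_sq_eq]
    simp only [PiLp.inner_apply, RCLike.inner_apply, conj_trivial]
  rw [sum_exp_inner_signVec, hsum, Real.exp_sum, Finset.prod_mul_distrib, Finset.prod_const,
    Finset.card_univ]
  gcongr with i
  exact exp_mul_sub_le_cosh _ (hp i)

lemma inner_signVec_update (σ : ι → Bool) (i : ι) (b : Bool) (θ : EuclideanSpace ℝ ι) :
    ⟪signVec (Function.update σ i b), θ⟫_ℝ =
      ⟪signVec σ, θ⟫_ℝ + ((if b then 1 else -1) - signVec σ i) * θ i := by
  have hupdate : signVec (Function.update σ i b) =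
      signVec σ + EuclideanSpace.single i ((if b then 1 else -1) - signVec σ i) := by
    ext j
    rcases eq_or_ne j i with rfl | hj
    · simp [signVec_apply]
    · simp [signVec_apply, hj]
  rw [hupdate, inner_add_left, EuclideanSpace.inner_single_left, conj_trivial]

lemma inner_signVec_update_not (σ : ι → Bool) (i : ι) (θ : EuclideanSpace ℝ ι) :
    ⟪signVec (Function.update σ i (!σ i)), θ⟫_ℝ = ⟪signVec σ, θ⟫_ℝ - 2 * (signVec σ i * θ i) := by
  rw [inner_signVec_update, signVec_apply]
  cases σ i <;> simp only [Bool.not_false, Bool.not_true, if_true, Bool.false_eq_true, if_false] <;>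
    ring

end SignVectors

section Tilt

open scoped InnerProductSpace

variable {ι : Type*} [Fintype ι] [DecidableEq ι]

lemma sum_exp_inner_signVec_pos (θ : EuclideanSpace ℝ ι) :
    0 < ∑ τ : ι → Bool, Real.exp ⟪signVec τ, θ⟫_ℝ :=
  Finset.sum_pos (fun _ _ => Real.exp_pos _) Finset.univ_nonempty

lemma tiltWeight_nonneg (θ : EuclideanSpace ℝ ι) (σ : ι → Bool) : 0 ≤ tiltWeight θ σ :=
  div_nonneg (Real.exp_pos _).le (sum_exp_inner_signVec_pos θ).le

lemma sum_tiltWeight (θ : EuclideanSpace ℝ ι) : ∑ σ, tiltWeight θ σ = 1 := by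
  simp_rw [tiltWeight, ← Finset.sum_div]
  exact div_self (sum_exp_inner_signVec_pos θ).ne'

lemma tiltWeight_zero (σ : ι → Bool) :
    tiltWeight (0 : EuclideanSpace ℝ ι) σ = (2 ^ Fintype.card ι)⁻¹ := by
  simp [tiltWeight]

lemma sum_tiltWeight_zero (A : Finset (ι → Bool)) :
    ∑ σ ∈ A, tiltWeight (0 : EuclideanSpace ℝ ι) σ = A.card / 2 ^ Fintype.card ι := by
  simp_rw [tiltWeight_zero, Finset.sum_const, nsmul_eq_mul, div_eq_mul_inv]

lemma tiltWeight_eq_exp_mul (θ : EuclideanSpace ℝ ι) (σ τ : ι → Bool) :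
    tiltWeight θ σ = Real.exp (⟪signVec σ, θ⟫_ℝ - ⟪signVec τ, θ⟫_ℝ) * tiltWeight θ τ := by
  rw [tiltWeight, tiltWeight, ← mul_div_assoc, ← Real.exp_add, sub_add_cancel]

lemma continuous_tiltWeight_smul (θ : EuclideanSpace ℝ ι) (σ : ι → Bool) :
    Continuous fun t : ℝ => tiltWeight (t • θ) σ := by
  unfold tiltWeight
  exact Continuous.div (by fun_prop) (by fun_prop) fun t => (sum_exp_inner_signVec_pos _).ne'

lemma tendsto_tiltWeight_smul_atTop {θ : EuclideanSpace ℝ ι} {σ τ : ι → Bool}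
    (h : ⟪signVec σ, θ⟫_ℝ < ⟪signVec τ, θ⟫_ℝ) :
    Tendsto (fun t : ℝ => tiltWeight (t • θ) σ) atTop (nhds 0) := by
  have hexp : Tendsto (fun t : ℝ => Real.exp (-(t * (⟪signVec τ, θ⟫_ℝ - ⟪signVec σ, θ⟫_ℝ))))
      atTop (nhds 0) :=
    Real.tendsto_exp_neg_atTop_nhds_zero.comp (tendsto_id.atTop_mul_const (sub_pos.2 h))
  refine squeeze_zero (fun t => tiltWeight_nonneg _ _) (fun t => ?_) hexp
  have hle : tiltWeight (t • θ) τ ≤ 1 := by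
    rw [← sum_tiltWeight (t • θ)]
    exact Finset.single_le_sum (fun σ _ => tiltWeight_nonneg (t • θ) σ) (Finset.mem_univ τ)
  rw [tiltWeight_eq_exp_mul _ σ τ, inner_smul_right, inner_smul_right, ← mul_sub, ← mul_neg,
    neg_sub]
  exact mul_le_of_le_one_right (Real.exp_pos _).le hle

lemma exists_tilt_sum_eq_half {θ : EuclideanSpace ℝ ι} {s : ℝ}
    (hs : ∃ τ : ι → Bool, s < ⟪signVec τ, θ⟫_ℝ)
    (huniform : (Finset.card {σ : ι → Bool | s < ⟪signVec σ, θ⟫_ℝ} : ℝ) < 2 ^ Fintype.card ι / 2) :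
    ∃ t : ℝ, 0 < t ∧ ∑ σ with s < ⟪signVec σ, θ⟫_ℝ, tiltWeight (t • θ) σ = 1 / 2 := by
  obtain ⟨τ, hτ⟩ := hs
  set g : ℝ → ℝ := fun t => ∑ σ with s < ⟪signVec σ, θ⟫_ℝ, tiltWeight (t • θ) σ with hg
  have hcont : Continuous g := continuous_finsetSum _ fun σ _ => continuous_tiltWeight_smul θ σ
  have hzero : g 0 < 1 / 2 := by
    simp only [hg, zero_smul, sum_tiltWeight_zero]
    rw [div_lt_iff₀ (by positivity)]
    linarith
  have hlim : Tendsto g atTop (nhds 1) := by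
    have hcompl : Tendsto (fun t : ℝ => ∑ σ with ¬ s < ⟪signVec σ, θ⟫_ℝ, tiltWeight (t • θ) σ)
        atTop (nhds 0) := by
      simpa only [Finset.sum_const_zero] using tendsto_finsetSum _ fun σ hσ =>
        tendsto_tiltWeight_smul_atTop ((not_lt.1 (Finset.mem_filter.1 hσ).2).trans_lt hτ)
    have hsub := hcompl.const_sub 1
    rw [sub_zero] at hsub
    refine hsub.congr fun t => ?_
    rw [← sum_tiltWeight (t • θ), ← Finset.sum_filter_add_sum_filter_not Finset.univ
      (fun σ => s < ⟪signVec σ, θ⟫_ℝ), add_sub_cancel_right]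
  obtain ⟨T, hT, hT0⟩ := ((hlim.eventually (lt_mem_nhds (by norm_num : (1 / 2 : ℝ) < 1))).and
    (eventually_gt_atTop 0)).exists
  obtain ⟨t, ht, hgt⟩ := intermediate_value_Ioo hT0.le hcont.continuousOn ⟨hzero, hT⟩
  exact ⟨t, ht.1, hgt⟩

end Tilt

section Crossing

open scoped InnerProductSpace

lemma sum_filter_le_sum_sum_filter {α κ : Type*} [Fintype α] {w : α → ℝ} (hw : ∀ a, 0 ≤ w a)
    {P : α → Prop} {Q : κ → α → Prop} [DecidablePred P] [∀ k, DecidablePred (Q k)] {K : Finset κ}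
    (h : ∀ a, P a → ∃ k ∈ K, Q k a) :
    ∑ a with P a, w a ≤ ∑ k ∈ K, ∑ a with Q k a, w a := by
  simp_rw [Finset.sum_filter]
  rw [Finset.sum_comm]
  refine Finset.sum_le_sum fun a _ => ?_
  have hterm : ∀ k ∈ K, 0 ≤ if Q k a then w a else 0 := fun k _ => by
    split_ifs
    exacts [hw a, le_rfl]
  split_ifs with hP
  · obtain ⟨k, hk, hQ⟩ := h a hP
    simpa only [if_pos hQ] using Finset.single_le_sum hterm hk
  · exact Finset.sum_nonneg hterm

lemma exists_le_lt_succ {f : ℕ → ℝ} {s : ℝ} {n : ℕ} (hzero : f 0 ≤ s) (hn : s < f n) :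
    ∃ k < n, f k ≤ s ∧ s < f (k + 1) := by
  induction n with
  | zero => exact absurd hn hzero.not_gt
  | succ n ih =>
    rcases le_or_gt (f n) s with h | h
    · exact ⟨n, n.lt_succ_self, h, hn⟩
    · obtain ⟨k, hk, hcross⟩ := ih h
      exact ⟨k, hk.trans n.lt_succ_self, hcross⟩

variable {ι : Type*} [Fintype ι] [DecidableEq ι]

lemma tiltWeight_mul_tiltWeight (θ : EuclideanSpace ℝ ι) (σ τ : ι → Bool) :
    tiltWeight θ σ * tiltWeight θ τ = Real.exp ⟪signVec σ + signVec τ, θ⟫_ℝ /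
      ((∑ ρ : ι → Bool, Real.exp ⟪signVec ρ, θ⟫_ℝ) *
        ∑ ρ : ι → Bool, Real.exp ⟪signVec ρ, θ⟫_ℝ) := by
  rw [tiltWeight, tiltWeight, div_mul_div_comm, ← Real.exp_add, inner_add_left]

lemma sum_compl_product_tiltWeight_mul (θ : EuclideanSpace ℝ ι) (A : Finset (ι → Bool)) :
    ∑ p ∈ Aᶜ ×ˢ A, tiltWeight θ p.1 * tiltWeight θ p.2 =
      (1 - ∑ σ ∈ A, tiltWeight θ σ) * ∑ σ ∈ A, tiltWeight θ σ := by
  rw [Finset.sum_product, ← Finset.sum_mul_sum, ← sum_tiltWeight θ,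
    ← Finset.sum_add_sum_compl A (tiltWeight θ), add_sub_cancel_left]

-- Exchanging the coordinates in `s` preserves the law of a pair of independent tilted vectors.
lemma sum_piecewise_mem_tiltWeight_mul (θ : EuclideanSpace ℝ ι) (s : Finset ι)
    (A : Finset (ι → Bool)) :
    ∑ p : (ι → Bool) × (ι → Bool) with s.piecewise p.2 p.1 ∈ A,
      tiltWeight θ p.1 * tiltWeight θ p.2 = ∑ σ ∈ A, tiltWeight θ σ := by
  have hinvol : Function.Involutive fun p : (ι → Bool) × (ι → Bool) =>
      (s.piecewise p.2 p.1, s.piecewise p.1 p.2) := fun p => by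
    ext i <;> by_cases hi : i ∈ s <;> simp [hi]
  calc ∑ p : (ι → Bool) × (ι → Bool) with s.piecewise p.2 p.1 ∈ A,
        tiltWeight θ p.1 * tiltWeight θ p.2
      = ∑ p ∈ A ×ˢ Finset.univ, tiltWeight θ p.1 * tiltWeight θ p.2 := by
        refine Finset.sum_equiv hinvol.toPerm (fun p => ?_) fun p _ => ?_
        · simp only [Finset.mem_filter, Finset.mem_univ, true_and, Finset.mem_product, and_true,
            Function.Involutive.coe_toPerm]
        · rw [tiltWeight_mul_tiltWeight, tiltWeight_mul_tiltWeight]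
          simp only [Function.Involutive.coe_toPerm]
          rw [signVec_piecewise_add, add_comm (signVec p.2)]
    _ = ∑ σ ∈ A, tiltWeight θ σ := by
        rw [Finset.sum_product, ← Finset.sum_mul_sum, sum_tiltWeight, mul_one]

lemma sum_tiltWeight_filter_mul_nonpos_le (θ : EuclideanSpace ℝ ι) (i : ι) :
    ∑ σ with signVec σ i * θ i ≤ 0, tiltWeight θ σ ≤ Real.exp (-(2 * |θ i|)) := by
  have hinvol : Function.Involutive fun σ : ι → Bool => Function.update σ i (!σ i) := fun σ => by
    simp
  have hflip : ∀ σ : ι → Bool, signVec σ i * θ i ≤ 0 →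
      tiltWeight θ σ = Real.exp (-(2 * |θ i|)) * tiltWeight θ (Function.update σ i (!σ i)) := by
    intro σ hσ
    have habs : |θ i| = -(signVec σ i * θ i) := by
      rw [← abs_of_nonpos hσ, abs_mul, abs_signVec_apply, one_mul]
    rw [tiltWeight_eq_exp_mul θ σ (Function.update σ i (!σ i)), inner_signVec_update_not, habs]
    ring_nf
  calc ∑ σ with signVec σ i * θ i ≤ 0, tiltWeight θ σ
      = ∑ σ with signVec σ i * θ i ≤ 0,
          Real.exp (-(2 * |θ i|)) * tiltWeight θ (Function.update σ i (!σ i)) :=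
        Finset.sum_congr rfl fun σ hσ => hflip σ (Finset.mem_filter.1 hσ).2
    _ ≤ ∑ σ, Real.exp (-(2 * |θ i|)) * tiltWeight θ (Function.update σ i (!σ i)) :=
        Finset.sum_le_sum_of_subset_of_nonneg (Finset.filter_subset _ _) fun σ _ _ =>
          mul_nonneg (Real.exp_pos _).le (tiltWeight_nonneg _ _)
    _ = Real.exp (-(2 * |θ i|)) := by
        have hsum := Equiv.sum_comp hinvol.toPerm (tiltWeight θ)
        rw [sum_tiltWeight] at hsum
        rw [← Finset.mul_sum]
        exact (congrArg _ hsum).trans (mul_one _)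

lemma sum_tiltWeight_mul_filter_ne_le (θ : EuclideanSpace ℝ ι) (i : ι) :
    ∑ p : (ι → Bool) × (ι → Bool) with p.1 i ≠ p.2 i, tiltWeight θ p.1 * tiltWeight θ p.2 ≤
      2 * Real.exp (-(2 * |θ i|)) := by
  set A : Finset (ι → Bool) := {σ | signVec σ i * θ i ≤ 0} with hA
  set K : Finset (Finset ι) := {∅, Finset.univ} with hK
  have hcover : ∀ p : (ι → Bool) × (ι → Bool), p.1 i ≠ p.2 i →
      ∃ s ∈ K, s.piecewise p.2 p.1 ∈ A := by
    intro p hp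
    simp only [hK, hA, Finset.mem_insert, Finset.mem_singleton, exists_eq_or_imp, exists_eq_left,
      Finset.piecewise_empty, Finset.piecewise_univ, Finset.mem_filter, Finset.mem_univ,
      true_and, signVec_apply_eq_neg_of_ne hp.symm, neg_mul, neg_nonpos]
    exact le_total _ _
  have hw : ∀ p : (ι → Bool) × (ι → Bool), 0 ≤ tiltWeight θ p.1 * tiltWeight θ p.2 := fun p =>
    mul_nonneg (tiltWeight_nonneg θ p.1) (tiltWeight_nonneg θ p.2)
  have hcard : (K.card : ℝ) ≤ 2 := mod_cast Finset.card_le_two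
  calc ∑ p : (ι → Bool) × (ι → Bool) with p.1 i ≠ p.2 i, tiltWeight θ p.1 * tiltWeight θ p.2
      ≤ ∑ s ∈ K, ∑ p : (ι → Bool) × (ι → Bool) with s.piecewise p.2 p.1 ∈ A,
          tiltWeight θ p.1 * tiltWeight θ p.2 := sum_filter_le_sum_sum_filter hw hcover
    _ = K.card * ∑ σ ∈ A, tiltWeight θ σ := by
        simp_rw [sum_piecewise_mem_tiltWeight_mul, Finset.sum_const, nsmul_eq_mul]
    _ ≤ 2 * Real.exp (-(2 * |θ i|)) :=
        mul_le_mul hcard (sum_tiltWeight_filter_mul_nonpos_le θ i)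
          (Finset.sum_nonneg fun σ _ => tiltWeight_nonneg θ σ) zero_le_two

end Crossing

section Halfspaces

open scoped InnerProductSpace

variable {d : ℕ}

lemma exists_inner_piecewise_Iic_crossing {θ : EuclideanSpace ℝ (Fin d)} {s : ℝ}
    {σ τ : Fin d → Bool} (hσ : ⟪signVec σ, θ⟫_ℝ ≤ s) (hτ : s < ⟪signVec τ, θ⟫_ℝ) :
    ∃ k, σ k ≠ τ k ∧ s < ⟪signVec ((Finset.Iic k).piecewise τ σ), θ⟫_ℝ ∧
      ⟪signVec ((Finset.Iic k).piecewise τ σ), θ⟫_ℝ ≤ s + 2 * |θ k| := by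
  let initial : ℕ → Finset (Fin d) := fun m => {i | (i : ℕ) < m}
  have hzero : initial 0 = ∅ := by ext; simp [initial]
  have hlast : initial d = Finset.univ := by ext; simp [initial]
  obtain ⟨m, hm, hle, hlt⟩ := exists_le_lt_succ (s := s) (n := d)
    (f := fun m => ⟪signVec ((initial m).piecewise τ σ), θ⟫_ℝ)
    (by rwa [hzero, Finset.piecewise_empty]) (by rwa [hlast, Finset.piecewise_univ])
  let k : Fin d := ⟨m, hm⟩
  have hIio : initial m = Finset.Iio k := by ext; simp [initial, k, Fin.lt_def]
  have hIic : initial (m + 1) = Finset.Iic k := by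
    ext i
    simp [initial, k, Fin.le_def]
  rw [hIio] at hle
  rw [hIic] at hlt
  have hjump : ⟪signVec ((Finset.Iic k).piecewise τ σ), θ⟫_ℝ =
      ⟪signVec ((Finset.Iio k).piecewise τ σ), θ⟫_ℝ + (signVec τ k - signVec σ k) * θ k := by
    rw [← Finset.Iio_insert, Finset.piecewise_insert, inner_signVec_update,
      signVec_apply _ k, signVec_apply _ k, signVec_apply _ k,
      Finset.piecewise_eq_of_notMem _ _ _ Finset.notMem_Iio_self]
  have hne : σ k ≠ τ k := fun heq => by
    rw [signVec_apply, signVec_apply, heq, sub_self, zero_mul, add_zero] at hjump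
    linarith
  have hbound : (signVec τ k - signVec σ k) * θ k ≤ 2 * |θ k| := by
    refine (le_abs_self _).trans_eq ?_
    rw [signVec_apply_eq_neg_of_ne hne, ← neg_add', ← two_mul, abs_mul, abs_neg, abs_mul,
      abs_signVec_apply, abs_two, mul_one]
  exact ⟨k, hne, hlt, by linarith⟩

-- Walk from a sign vector below the threshold to one above it, flipping one coordinate at a time;
-- the pair is random. Where the threshold is crossed, either the flipped coordinate has a small
-- weight `θ k`, so that the walk lands in the window, or the two ends differ in a coordinate where
-- the tilt makes this unlikely.
lemma one_eighth_le_mul_sum_tiltWeight {θ : EuclideanSpace ℝ (Fin d)} {s B : ℝ}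
    (hB : 2 * d * Real.exp (-(2 * B)) ≤ 1 / 8)
    (hhalf : ∑ σ with s < ⟪signVec σ, θ⟫_ℝ, tiltWeight θ σ = 1 / 2) :
    1 / 8 ≤ d * ∑ σ with s < ⟪signVec σ, θ⟫_ℝ ∧ ⟪signVec σ, θ⟫_ℝ ≤ s + 2 * B,
      tiltWeight θ σ := by
  set A : Finset (Fin d → Bool) := {σ | s < ⟪signVec σ, θ⟫_ℝ} with hA
  set W : Finset (Fin d → Bool) := {σ | s < ⟪signVec σ, θ⟫_ℝ ∧ ⟪signVec σ, θ⟫_ℝ ≤ s + 2 * B}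
    with hW
  let w : (Fin d → Bool) × (Fin d → Bool) → ℝ := fun p => tiltWeight θ p.1 * tiltWeight θ p.2
  let Q : Fin d → (Fin d → Bool) × (Fin d → Bool) → Prop := fun k p =>
    if B < |θ k| then p.1 k ≠ p.2 k else (Finset.Iic k).piecewise p.2 p.1 ∈ W
  have hQdec : ∀ k, DecidablePred (Q k) := fun k => Classical.decPred _
  have hw : ∀ p, 0 ≤ w p := fun p => mul_nonneg (tiltWeight_nonneg θ p.1) (tiltWeight_nonneg θ p.2)
  have hpair : ∑ p with p ∈ Aᶜ ×ˢ A, w p = 1 / 4 := by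
    rw [Finset.filter_univ_mem, sum_compl_product_tiltWeight_mul, hhalf]
    norm_num
  have hcross : ∀ p, p ∈ Aᶜ ×ˢ A → ∃ k ∈ Finset.univ, Q k p := by
    simp only [Finset.mem_product, Finset.mem_compl, hA, Finset.mem_filter, Finset.mem_univ,
      true_and, not_lt]
    rintro p ⟨h₁, h₂⟩
    obtain ⟨k, hne, hlt, hle⟩ := exists_inner_piecewise_Iic_crossing h₁ h₂
    refine ⟨k, ?_⟩
    simp only [Q, hW, Finset.mem_filter, Finset.mem_univ, true_and]
    split_ifs with hk
    exacts [hne, ⟨hlt, by linarith⟩]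
  have hstep : ∀ k, ∑ p with Q k p, w p ≤ ∑ σ ∈ W, tiltWeight θ σ + 2 * Real.exp (-(2 * B)) := by
    intro k
    have hwindow : 0 ≤ ∑ σ ∈ W, tiltWeight θ σ := Finset.sum_nonneg fun σ _ => tiltWeight_nonneg θ σ
    by_cases hk : B < |θ k|
    · simp only [Q, if_pos hk]
      refine (sum_tiltWeight_mul_filter_ne_le θ k).trans (le_add_of_nonneg_of_le hwindow ?_)
      gcongr
    · simp only [Q, if_neg hk]
      refine (sum_piecewise_mem_tiltWeight_mul θ _ W).trans_le (le_add_of_nonneg_right ?_)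
      positivity
  have htotal := (sum_filter_le_sum_sum_filter hw hcross).trans
    (Finset.sum_le_sum fun k _ => hstep k)
  rw [hpair, Finset.sum_const, Finset.card_univ, Fintype.card_fin, nsmul_eq_mul] at htotal
  linarith

lemma two_pow_mul_exp_le_card_of_sum_tiltWeight_eq_half {p θ : EuclideanSpace ℝ (Fin d)}
    (hp : ∀ i, |p i| < 1) {B : ℝ} (hB : 2 * d * Real.exp (-(2 * B)) ≤ 1 / 8)
    (hhalf : ∑ σ with ⟪p, θ⟫_ℝ < ⟪signVec σ, θ⟫_ℝ, tiltWeight θ σ = 1 / 2) :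
    2 ^ d * Real.exp (-(‖p‖ ^ 2 / 2 + (∑ i, p i ^ 4) / 3)) ≤ 8 * d * Real.exp (2 * B) *
      (Finset.card {σ : Fin d → Bool | ⟪p, θ⟫_ℝ < ⟪signVec σ, θ⟫_ℝ} : ℝ) := by
  set A : Finset (Fin d → Bool) := {σ | ⟪p, θ⟫_ℝ < ⟪signVec σ, θ⟫_ℝ}
  set J := ‖p‖ ^ 2 / 2 + (∑ i, p i ^ 4) / 3
  set Z := ∑ σ : Fin d → Bool, Real.exp ⟪signVec σ, θ⟫_ℝ
  have hZpos : 0 < Z := sum_exp_inner_signVec_pos θ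
  have hZ : 2 ^ d * Real.exp (⟪p, θ⟫_ℝ - J) ≤ Z := by
    simpa only [Fintype.card_fin] using two_pow_mul_exp_le_sum_exp_inner_signVec hp θ
  have hwindow : ∑ σ with ⟪p, θ⟫_ℝ < ⟪signVec σ, θ⟫_ℝ ∧ ⟪signVec σ, θ⟫_ℝ ≤ ⟪p, θ⟫_ℝ + 2 * B,
      tiltWeight θ σ ≤ A.card * (Real.exp (⟪p, θ⟫_ℝ + 2 * B) / Z) := by
    rw [← nsmul_eq_mul]
    refine (Finset.sum_le_card_nsmul _ _ (Real.exp (⟪p, θ⟫_ℝ + 2 * B) / Z) fun σ hσ => ?_).trans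
      (nsmul_le_nsmul_left (by positivity) (Finset.card_le_card fun σ hσ => ?_))
    · have hle := (Finset.mem_filter.1 hσ).2.2
      unfold tiltWeight
      gcongr
    · exact Finset.mem_filter.2 ⟨Finset.mem_univ σ, (Finset.mem_filter.1 hσ).2.1⟩
  have hmass : Z ≤ 8 * d * (A.card * Real.exp (⟪p, θ⟫_ℝ + 2 * B)) := by
    have hmass := (one_eighth_le_mul_sum_tiltWeight hB hhalf).trans
      (mul_le_mul_of_nonneg_left hwindow d.cast_nonneg)
    rw [← mul_div_assoc, ← mul_div_assoc, le_div_iff₀ hZpos] at hmass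
    linarith
  refine le_of_mul_le_mul_right ?_ (Real.exp_pos ⟪p, θ⟫_ℝ)
  calc 2 ^ d * Real.exp (-J) * Real.exp ⟪p, θ⟫_ℝ
      = 2 ^ d * Real.exp (⟪p, θ⟫_ℝ - J) := by rw [mul_assoc, ← Real.exp_add, neg_add_eq_sub]
    _ ≤ 8 * d * (A.card * Real.exp (⟪p, θ⟫_ℝ + 2 * B)) := hZ.trans hmass
    _ = 8 * d * Real.exp (2 * B) * A.card * Real.exp ⟪p, θ⟫_ℝ := by
        rw [Real.exp_add]
        ring

lemma two_pow_mul_exp_le_card_lt_inner_signVec (hd : 3 ≤ d) {p θ : EuclideanSpace ℝ (Fin d)}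
    (hp : ∀ i, |p i| < 1) (hθ : θ ≠ 0) :
    2 ^ d * Real.exp (-(‖p‖ ^ 2 / 2 + (∑ i, p i ^ 4) / 3)) ≤ 8 * d ^ 5 *
      (Finset.card {σ : Fin d → Bool | ⟪p, θ⟫_ℝ < ⟪signVec σ, θ⟫_ℝ} : ℝ) := by
  have hd' : (3 : ℝ) ≤ d := mod_cast hd
  rcases le_or_gt ((2 : ℝ) ^ d / 2)
    (Finset.card {σ : Fin d → Bool | ⟪p, θ⟫_ℝ < ⟪signVec σ, θ⟫_ℝ}) with hhalf | hhalf
  · have hexp : Real.exp (-(‖p‖ ^ 2 / 2 + (∑ i, p i ^ 4) / 3)) ≤ 1 :=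
      Real.exp_le_one_iff.2 (neg_nonpos.2 (by positivity))
    have hpow : (1 : ℝ) ≤ d ^ 5 := one_le_pow₀ (by linarith)
    calc 2 ^ d * Real.exp (-(‖p‖ ^ 2 / 2 + (∑ i, p i ^ 4) / 3))
        ≤ 2 ^ d * 1 := by gcongr
      _ ≤ 8 * 1 * (2 ^ d / 2) := by linarith [pow_pos (zero_lt_two' ℝ) d]
      _ ≤ _ := by gcongr
  · obtain ⟨t, ht, hsum⟩ :=
      exists_tilt_sum_eq_half (exists_inner_lt_inner_signVec hp hθ) (by rwa [Fintype.card_fin])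
    have hmem : ∀ σ : Fin d → Bool,
        ⟪p, t • θ⟫_ℝ < ⟪signVec σ, t • θ⟫_ℝ ↔ ⟪p, θ⟫_ℝ < ⟪signVec σ, θ⟫_ℝ := fun σ => by
      rw [inner_smul_right, inner_smul_right, mul_lt_mul_iff_right₀ ht]
    have hexp : Real.exp (2 * (2 * Real.log d)) = d ^ 4 := by
      rw [← mul_assoc, show (2 : ℝ) * 2 = (4 : ℕ) by norm_num, ← Real.log_pow,
        Real.exp_log (by positivity)]
    have hB : 2 * d * Real.exp (-(2 * (2 * Real.log d))) ≤ 1 / 8 := by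
      rw [Real.exp_neg, hexp, ← div_eq_mul_inv, div_le_div_iff₀ (by positivity) (by norm_num)]
      nlinarith [pow_le_pow_left₀ (by norm_num) hd' 3]
    have hcard := two_pow_mul_exp_le_card_of_sum_tiltWeight_eq_half (θ := t • θ) hp hB
      (by simpa only [hmem] using hsum)
    simp only [hmem, hexp] at hcard
    exact hcard.trans_eq (by ring)

end Halfspaces

/-- The traces on the finite family of points `v` of the open halfspaces of `V`, as sets of
indices: the set system whose VC dimension bounds the number of events to be avoided. -/
def halfspaceTraces {α V : Type*} [Fintype α] [AddCommGroup V] [Module ℝ V] (v : α → V) :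
    Finset (Finset α) :=
  open Classical in {A | ∃ (l : Module.Dual ℝ V) (s : ℝ), ∀ a, a ∈ A ↔ s < l (v a)}

section HalfspaceTraces

variable {α V : Type*} [Fintype α] [AddCommGroup V] [Module ℝ V]

lemma mem_halfspaceTraces {v : α → V} {A : Finset α} :
    A ∈ halfspaceTraces v ↔ ∃ (l : Module.Dual ℝ V) (s : ℝ), ∀ a, a ∈ A ↔ s < l (v a) := by
  simp only [halfspaceTraces, Finset.mem_filter, Finset.mem_univ, true_and]

variable [Module.Finite ℝ V]

-- A larger set has, by Radon, two complementary parts whose convex hulls meet.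
lemma card_le_of_shatters_halfspaceTraces [DecidableEq α] {v : α → V} {T : Finset α}
    (hT : (halfspaceTraces v).Shatters T) : T.card ≤ Module.finrank ℝ V + 1 := by
  classical
  by_contra! hcard
  have hdep : ¬ AffineIndependent ℝ fun a : T => v a := fun hindep => by
    have hle := hindep.card_le_finrank_succ
    rw [Fintype.card_coe] at hle
    have := Submodule.finrank_le (vectorSpan ℝ (range fun a : T => v a))
    lia
  obtain ⟨I, x, hxI, hxIc⟩ := Convex.radon_partition hdep
  obtain ⟨A, hA, hTA⟩ := hT (t := T.filter fun a => ∃ h : a ∈ T, (⟨a, h⟩ : T) ∈ I)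
    (Finset.filter_subset _ _)
  obtain ⟨l, s, hl⟩ := mem_halfspaceTraces.1 hA
  have hmem : ∀ a : T, a ∈ I ↔ s < l (v a) := fun a => by
    have := Finset.ext_iff.1 hTA a
    simp only [Finset.mem_inter, a.2, true_and, Finset.mem_filter, exists_true_left] at this
    rw [← hl, this]
  have hgt : s < l x := convexHull_min (by rintro _ ⟨a, ha, rfl⟩; exact (hmem a).1 ha)
    (convex_halfSpace_gt l.isLinear s) hxI
  have hle : l x ≤ s := convexHull_min
    (by rintro _ ⟨a, ha, rfl⟩; exact not_lt.1 (mt (hmem a).2 ha))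
    (convex_halfSpace_le l.isLinear s) hxIc
  exact hgt.not_ge hle

lemma card_halfspaceTraces_le [Nonempty α] (v : α → V) :
    (halfspaceTraces v).card ≤
      (Module.finrank ℝ V + 2) * Fintype.card α ^ (Module.finrank ℝ V + 1) := by
  classical
  calc (halfspaceTraces v).card
      ≤ (halfspaceTraces v).shatterer.card := Finset.card_le_card_shatterer _
    _ ≤ ∑ k ∈ Finset.Iic (halfspaceTraces v).vcDim, (Fintype.card α).choose k :=
        Finset.card_shatterer_le_sum_vcDim
    _ ≤ ∑ k ∈ Finset.Iic (Module.finrank ℝ V + 1), (Fintype.card α).choose k :=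
        Finset.sum_le_sum_of_subset (Finset.Iic_subset_Iic.2 (Finset.sup_le fun T hT =>
          card_le_of_shatters_halfspaceTraces (Finset.mem_shatterer.1 hT)))
    _ ≤ ∑ _k ∈ Finset.Iic (Module.finrank ℝ V + 1),
          Fintype.card α ^ (Module.finrank ℝ V + 1) :=
        Finset.sum_le_sum fun _ hk => (Nat.choose_le_pow _ _).trans
          (Nat.pow_le_pow_right Fintype.card_pos (Finset.mem_Iic.1 hk))
    _ = (Module.finrank ℝ V + 2) * Fintype.card α ^ (Module.finrank ℝ V + 1) := by
        rw [Finset.sum_const, Nat.card_Iic, smul_eq_mul]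

end HalfspaceTraces

section RandomSample

lemma exists_notMem_le_of_sum_le {Ω : Type*} [Fintype Ω] [Nonempty Ω] {bad : Finset Ω}
    {f : Ω → ℝ} {m : ℝ} (hf : ∀ ω, 0 ≤ f ω) (hbad : 4 * (bad.card : ℝ) ≤ Fintype.card Ω)
    (hsum : 4 * ∑ ω, f ω ≤ m * Fintype.card Ω) : ∃ ω ∉ bad, 2 * f ω ≤ m := by
  classical
  by_contra! h
  have hcompl : ((badᶜ.card : ℕ) : ℝ) = Fintype.card Ω - bad.card := by
    rw [Finset.card_compl, Nat.cast_sub (Finset.card_le_univ bad)]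
  have hΩ : (0 : ℝ) < Fintype.card Ω := Nat.cast_pos.2 Fintype.card_pos
  have hne : badᶜ.Nonempty := Finset.card_pos.1 (Nat.cast_pos.1 (by rw [hcompl]; linarith))
  have hlt : (Fintype.card Ω - bad.card) * (m / 2) < ∑ ω, f ω := by
    calc (Fintype.card Ω - bad.card) * (m / 2) = ∑ _ω ∈ badᶜ, m / 2 := by
          rw [Finset.sum_const, nsmul_eq_mul, hcompl]
      _ < ∑ ω ∈ badᶜ, f ω := Finset.sum_lt_sum_of_nonempty hne fun ω hω => by
          linarith [h ω (Finset.mem_compl.1 hω)]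
      _ ≤ ∑ ω, f ω := Finset.sum_le_univ_sum_of_nonneg hf
  have hm : 0 ≤ m := nonneg_of_mul_nonneg_left
    ((mul_nonneg zero_le_four (Finset.sum_nonneg fun ω _ => hf ω)).trans hsum) hΩ
  nlinarith

variable {α κ ι : Type*} [Fintype α] [DecidableEq α] [Fintype κ] [DecidableEq κ]

lemma card_filter_apply_mem (A : Finset α) (j : κ) :
    Finset.card {ω : κ → α | ω j ∈ A} = A.card * Fintype.card α ^ (Fintype.card κ - 1) := by
  have hmaps : Set.MapsTo (fun ω : κ → α => ω j)
      ({ω : κ → α | ω j ∈ A} : Finset (κ → α)) A := fun ω hω => (Finset.mem_filter.1 hω).2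
  rw [Finset.card_eq_sum_card_fiberwise hmaps, ← smul_eq_mul, ← Finset.sum_const]
  refine Finset.sum_congr rfl fun a ha => ?_
  rw [Finset.filter_filter, ← Finset.card_univ (α := α), ← Fintype.piFinset_univ,
    ← Fintype.card_filter_piFinset_const_eq_of_mem Finset.univ j (Finset.mem_univ a)]
  congr 1
  ext ω
  simp only [Finset.mem_filter, and_congr_right_iff, and_iff_right_iff_imp]
  rintro - rfl
  exact ha

lemma card_filter_forall_notMem_le {A : Finset α} {q : ℝ} (hq : q * Fintype.card α ≤ A.card) :
    (Finset.card {ω : κ → α | ∀ j, ω j ∉ A} : ℝ) ≤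
      Fintype.card (κ → α) * Real.exp (-(q * Fintype.card κ)) := by
  have hset : ({ω : κ → α | ∀ j, ω j ∉ A} : Finset (κ → α)) = Fintype.piFinset fun _ => Aᶜ := by
    ext ω
    simp
  have hcompl : ((Aᶜ.card : ℕ) : ℝ) ≤ Fintype.card α * Real.exp (-q) := by
    rw [Finset.card_compl, Nat.cast_sub (Finset.card_le_univ A)]
    nlinarith [Real.add_one_le_exp (-q), (Nat.cast_nonneg (Fintype.card α) : (0 : ℝ) ≤ _)]
  rw [hset, Fintype.card_piFinset, Finset.prod_const, Finset.card_univ, Fintype.card_fun,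
    mul_comm q, ← mul_neg, Real.exp_nat_mul, Nat.cast_pow, Nat.cast_pow, ← mul_pow]
  gcongr

lemma card_filter_exists_mem_le {A : Finset α} {ε : ℝ} (hA : (A.card : ℝ) ≤ ε * Fintype.card α) :
    (Finset.card {ω : κ → α | ∃ j, ω j ∈ A} : ℝ) ≤
      Fintype.card κ * ε * Fintype.card (κ → α) := by
  have hunion : Finset.card {ω : κ → α | ∃ j, ω j ∈ A} ≤
      Fintype.card κ * (A.card * Fintype.card α ^ (Fintype.card κ - 1)) := by
    have hset : ({ω : κ → α | ∃ j, ω j ∈ A} : Finset (κ → α)) =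
        Finset.univ.biUnion fun j => {ω : κ → α | ω j ∈ A} := by
      ext ω
      simp
    rw [hset, ← Finset.card_univ (α := κ)]
    exact Finset.card_biUnion_le_card_mul _ _ _ fun j _ => (card_filter_apply_mem A j).le
  rcases Nat.eq_zero_or_pos (Fintype.card κ) with hκ | hκ
  · rw [hκ, zero_mul, Nat.le_zero] at hunion
    rw [hunion, hκ, Nat.cast_zero, zero_mul, zero_mul]
  calc (Finset.card {ω : κ → α | ∃ j, ω j ∈ A} : ℝ)
      ≤ Fintype.card κ * (A.card * Fintype.card α ^ (Fintype.card κ - 1)) := mod_cast hunion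
    _ ≤ Fintype.card κ * (ε * Fintype.card α * Fintype.card α ^ (Fintype.card κ - 1)) := by gcongr
    _ = Fintype.card κ * ε * Fintype.card (κ → α) := by
        rw [mul_assoc ε, mul_pow_sub_one hκ.ne', Fintype.card_fun, Nat.cast_pow, mul_assoc]

lemma sum_card_filter_exists_mem_le {Y : Finset ι} {C : ι → Finset α} {ε : ℝ}
    (hC : ∀ y ∈ Y, ((C y).card : ℝ) ≤ ε * Fintype.card α) :
    ∑ ω : κ → α, ((Y.filter fun y => ∃ j, ω j ∈ C y).card : ℝ) ≤
      Y.card * (Fintype.card κ * ε) * Fintype.card (κ → α) := by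
  have hswap : ∑ ω : κ → α, (Y.filter fun y => ∃ j, ω j ∈ C y).card =
      ∑ y ∈ Y, Finset.card {ω : κ → α | ∃ j, ω j ∈ C y} :=
    Finset.sum_card_bipartiteAbove_eq_sum_card_bipartiteBelow fun (ω : κ → α) y => ∃ j, ω j ∈ C y
  rw [← Nat.cast_sum, hswap, Nat.cast_sum, mul_assoc, ← nsmul_eq_mul]
  exact Finset.sum_le_card_nsmul _ _ _ fun y hy => card_filter_exists_mem_le (hC y hy)

lemma card_biUnion_forall_notMem_le {𝓗 : Finset (Finset α)} {q : ℝ}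
    (hH : ∀ H ∈ 𝓗, q * Fintype.card α ≤ H.card)
    (hcard : 4 * (𝓗.card : ℝ) ≤ Real.exp (q * Fintype.card κ)) :
    4 * ((𝓗.biUnion fun H => {ω : κ → α | ∀ j, ω j ∉ H}).card : ℝ) ≤ Fintype.card (κ → α) := by
  have hunion : ((𝓗.biUnion fun H => {ω : κ → α | ∀ j, ω j ∉ H}).card : ℝ) ≤
      𝓗.card * (Fintype.card (κ → α) * Real.exp (-(q * Fintype.card κ))) := by
    refine (Nat.cast_le.2 Finset.card_biUnion_le).trans ?_
    rw [Nat.cast_sum, ← nsmul_eq_mul]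
    exact Finset.sum_le_card_nsmul _ _ _ fun H hHmem => card_filter_forall_notMem_le (hH H hHmem)
  calc 4 * ((𝓗.biUnion fun H => {ω : κ → α | ∀ j, ω j ∉ H}).card : ℝ)
      ≤ 4 * 𝓗.card * (Fintype.card (κ → α) * Real.exp (-(q * Fintype.card κ))) := by linarith
    _ ≤ Real.exp (q * Fintype.card κ) *
          (Fintype.card (κ → α) * Real.exp (-(q * Fintype.card κ))) := by gcongr
    _ = Fintype.card (κ → α) := by
        rw [mul_left_comm, ← Real.exp_add, add_neg_cancel, Real.exp_zero, mul_one]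

end RandomSample

section HittingSets

variable {α κ ι : Type*} [Fintype α] [Nonempty α] [Fintype κ]

lemma exists_tuple_hitting {𝓗 : Finset (Finset α)} {Y : Finset ι} {C : ι → Finset α} {ε q : ℝ}
    (hκ : Fintype.card κ * ε ≤ 1 / 4) (hC : ∀ y ∈ Y, ((C y).card : ℝ) ≤ ε * Fintype.card α)
    (hH : ∀ H ∈ 𝓗, q * Fintype.card α ≤ H.card)
    (hcard : 4 * (𝓗.card : ℝ) ≤ Real.exp (q * Fintype.card κ)) :
    ∃ ω : κ → α, (∀ H ∈ 𝓗, ∃ j, ω j ∈ H) ∧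
      ∃ Y' ⊆ Y, Y.card ≤ 2 * Y'.card ∧ ∀ y ∈ Y', ∀ j, ω j ∉ C y := by
  classical
  have hsum : 4 * ∑ ω : κ → α, ((Y.filter fun y => ∃ j, ω j ∈ C y).card : ℝ) ≤
      Y.card * Fintype.card (κ → α) := by
    calc 4 * ∑ ω : κ → α, ((Y.filter fun y => ∃ j, ω j ∈ C y).card : ℝ)
        ≤ 4 * (Y.card * (Fintype.card κ * ε) * Fintype.card (κ → α)) := by
          gcongr
          exact sum_card_filter_exists_mem_le hC
      _ ≤ 4 * (Y.card * (1 / 4) * Fintype.card (κ → α)) := by gcongr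
      _ = Y.card * Fintype.card (κ → α) := by ring
  obtain ⟨ω, hω, hYω⟩ := exists_notMem_le_of_sum_le (fun _ => Nat.cast_nonneg _)
    (card_biUnion_forall_notMem_le hH hcard) hsum
  have hfew : 2 * (Y.filter fun y => ∃ j, ω j ∈ C y).card ≤ Y.card := mod_cast hYω
  have hsplit := Finset.card_filter_add_card_filter_not (s := Y) fun y => ∃ j, ω j ∈ C y
  refine ⟨ω, fun H hHmem => ?_, Y.filter fun y => ¬ ∃ j, ω j ∈ C y, Finset.filter_subset _ _,
    by lia, fun y hy => not_exists.1 (Finset.mem_filter.1 hy).2⟩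
  by_contra! hmiss
  exact hω (Finset.mem_biUnion.2 ⟨H, hHmem, Finset.mem_filter.2 ⟨Finset.mem_univ ω, hmiss⟩⟩)

-- The set consists of about `1 / (4 * ε)` independent uniform points of `α`.
lemma exists_finset_hitting {𝓗 : Finset (Finset α)} {Y : Finset ι} {C : ι → Finset α} {ε k : ℝ}
    (hε : 0 < ε) (hε' : ε ≤ 1 / 4) (hk : 0 ≤ k)
    (hC : ∀ y ∈ Y, ((C y).card : ℝ) ≤ ε * Fintype.card α)
    (hH : ∀ H ∈ 𝓗, k * ε * Fintype.card α ≤ H.card)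
    (hcard : 4 * (𝓗.card : ℝ) ≤ Real.exp (k / 8)) :
    ∃ A : Finset α, (∀ H ∈ 𝓗, ∃ a ∈ A, a ∈ H) ∧
      ∃ Y' ⊆ Y, Y.card ≤ 2 * Y'.card ∧ ∀ y ∈ Y', Disjoint A (C y) := by
  classical
  obtain ⟨n, hn_ge, hn_le⟩ : ∃ n : ℕ, 1 / 8 ≤ n * ε ∧ n * ε ≤ 1 / 4 := by
    have hfloor := Nat.floor_le (show 0 ≤ 1 / (4 * ε) by positivity)
    have hlt := Nat.lt_floor_add_one (1 / (4 * ε))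
    have hone : (1 : ℝ) ≤ ⌊1 / (4 * ε)⌋₊ := by
      rw [Nat.one_le_cast, Nat.one_le_floor_iff, le_div_iff₀ (by positivity)]
      linarith
    rw [le_div_iff₀ (by positivity)] at hfloor
    rw [div_lt_iff₀ (by positivity)] at hlt
    exact ⟨⌊1 / (4 * ε)⌋₊, by nlinarith [mul_le_mul_of_nonneg_right hone hε.le], by linarith⟩
  have hexp : Real.exp (k / 8) ≤ Real.exp (k * ε * Fintype.card (Fin n)) := by
    rw [Fintype.card_fin]
    gcongr
    nlinarith
  obtain ⟨ω, hhit, Y', hY', hcardY', hmiss⟩ := exists_tuple_hitting (κ := Fin n)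
    (by rwa [Fintype.card_fin]) hC hH (hcard.trans hexp)
  refine ⟨Finset.univ.image ω, fun H hHmem => ?_, Y', hY', hcardY', fun y hy =>
    Finset.disjoint_left.2 ?_⟩
  · obtain ⟨j, hj⟩ := hhit H hHmem
    exact ⟨ω j, Finset.mem_image_of_mem ω (Finset.mem_univ j), hj⟩
  · simpa using hmiss y hy

end HittingSets

section Cube

open scoped InnerProductSpace

variable {d : ℕ}

/-- The homothety `v ↦ (v + 1) / 2` of `ℝ^d`, which maps the cube `[-1, 1]^d` onto `[0, 1]^d`. -/
def cubeMap (d : ℕ) : E d →ᵃ[ℝ] E d :=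
  AffineMap.homothety (WithLp.toLp 2 1) (1 / 2 : ℝ)

/-- The vertices of `{0, 1}^d` that correspond to the sign vectors in `A`. -/
def cubeVertices (A : Finset (Fin d → Bool)) : Set (E d) :=
  (fun σ => cubeMap d (signVec σ)) '' A

lemma cubeMap_eq (x : E d) : cubeMap d x = (1 / 2 : ℝ) • (x + WithLp.toLp 2 1) := by
  rw [cubeMap, AffineMap.homothety_apply, vsub_eq_sub, vadd_eq_add]
  module

lemma cubeVertices_subset_cube01 (A : Finset (Fin d → Bool)) : cubeVertices A ⊆ cube01 d := by
  rintro _ ⟨σ, -, rfl⟩ i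
  cases h : σ i <;> norm_num [cubeMap_eq, signVec_apply, h]

lemma inner_cubeMap_lt_inner_cubeMap_iff {x y θ : E d} :
    ⟪cubeMap d x, θ⟫_ℝ < ⟪cubeMap d y, θ⟫_ℝ ↔ ⟪x, θ⟫_ℝ < ⟪y, θ⟫_ℝ := by
  rw [cubeMap_eq, cubeMap_eq, real_inner_smul_left, real_inner_smul_left,
    mul_lt_mul_iff_right₀ one_half_pos, inner_add_left, inner_add_left, add_lt_add_iff_right]

lemma cubeMap_mem_interior_convexHull_cubeVertices [NeZero d] {A : Finset (Fin d → Bool)} {p : E d}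
    (h : ∀ θ ≠ 0, ∃ σ ∈ A, ⟪p, θ⟫_ℝ < ⟪signVec σ, θ⟫_ℝ) :
    cubeMap d p ∈ interior (convexHull ℝ (cubeVertices A)) := by
  refine mem_interior_convexHull_of_forall_exists_inner_lt fun θ hθ => ?_
  obtain ⟨σ, hσ, hlt⟩ := h θ hθ
  exact ⟨_, mem_image_of_mem _ hσ, inner_cubeMap_lt_inner_cubeMap_iff.2 hlt⟩

lemma cubeMap_notMem_convexHull_cubeVertices {A : Finset (Fin d → Bool)} {y : E d}
    (h : ∀ σ ∈ A, ⟪signVec σ, y⟫_ℝ < ‖y‖ ^ 2) : cubeMap d y ∉ convexHull ℝ (cubeVertices A) := by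
  refine notMem_convexHull_of_forall_inner_lt (θ := y) ?_
  rintro _ ⟨σ, hσ, rfl⟩
  rw [inner_cubeMap_lt_inner_cubeMap_iff, real_inner_self_eq_norm_sq]
  exact h σ hσ

lemma finite_cube01 (d : ℕ) : (cube01 d).Finite := by
  have hbox : (Set.pi univ fun _ : Fin d => ({0, 1} : Set ℝ)).Finite :=
    Set.Finite.pi fun _ => Set.toFinite _
  exact (hbox.image (WithLp.toLp 2)).subset fun x hx => ⟨x.ofLp, fun i _ => hx i, rfl⟩

lemma ncard_facets_convexHull_le_maxFacets01 {S : Set (E d)} (hS : S ⊆ cube01 d)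
    (hint : (interior (convexHull ℝ S)).Nonempty) :
    (facets (convexHull ℝ S)).ncard ≤ maxFacets01 d := by
  have hfin := (finite_cube01 d).subset hS
  have hbdd : BddAbove {k | ∃ F : Finset (E d), (F : Set (E d)) ⊆ cube01 d ∧
      Module.finrank ℝ (vectorSpan ℝ (F : Set (E d))) = d ∧
      k = numFacets d (convexHull ℝ (F : Set (E d)))} := by
    refine (((finite_cube01 d).finite_subsets.image fun F =>
      numFacets d (convexHull ℝ F)).subset ?_).bddAbove
    rintro _ ⟨F, hF, -, rfl⟩
    exact mem_image_of_mem _ hF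
  refine le_csSup hbdd ⟨hfin.toFinset, by rwa [hfin.coe_toFinset], ?_, ?_⟩
  · rw [hfin.coe_toFinset, ← direction_affineSpan,
      interior_convexHull_nonempty_iff_affineSpan_eq_top.1 hint, AffineSubspace.direction_top,
      finrank_top, finrank_euclideanSpace, Fintype.card_fin]
  · rw [hfin.coe_toFinset, numFacets, facets, finrank_euclideanSpace, Fintype.card_fin]

lemma one_le_maxFacets01 [NeZero d] : 1 ≤ maxFacets01 d := by
  have hfin := (finite_cube01 d).subset (cubeVertices_subset_cube01 Finset.univ)
  have hint : (interior (convexHull ℝ (cubeVertices (d := d) Finset.univ))).Nonempty :=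
    ⟨cubeMap d 0, cubeMap_mem_interior_convexHull_cubeVertices fun θ hθ => by
      simpa using exists_inner_lt_inner_signVec (p := 0) (by simp) hθ⟩
  calc 1 ≤ (facets (convexHull ℝ (cubeVertices (d := d) Finset.univ))).ncard :=
        (Set.ncard_pos (finite_facets_convexHull hfin)).2 (facets_convexHull_nonempty hfin hint)
    _ ≤ maxFacets01 d :=
        ncard_facets_convexHull_le_maxFacets01 (cubeVertices_subset_cube01 _) hint

end Cube

section Sampling

open scoped InnerProductSpace

variable {d : ℕ}

lemma four_mul_add_two_mul_two_pow_le_exp (hd : 16 ≤ d) :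
    4 * ((d + 2) * (2 ^ d) ^ (d + 1)) ≤ Real.exp ((d : ℝ) ^ 4 / 64) := by
  have hd' : (16 : ℝ) ≤ d := mod_cast hd
  have hlin : ((d + 2 : ℕ) : ℝ) ≤ ((2 ^ (d + 1) : ℕ) : ℝ) := Nat.cast_le.2 Nat.lt_two_pow_self
  push_cast at hlin
  calc 4 * (((d : ℝ) + 2) * (2 ^ d) ^ (d + 1))
      ≤ 2 ^ 2 * (2 ^ (d + 1) * (2 ^ d) ^ (d + 1)) := by
        gcongr
        norm_num
    _ = 2 ^ (d ^ 2 + 2 * d + 3) := by ring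
    _ ≤ Real.exp 1 ^ (d ^ 2 + 2 * d + 3) := by
        gcongr
        linarith [Real.add_one_le_exp 1]
    _ ≤ Real.exp ((d : ℝ) ^ 4 / 64) := by
        rw [← Real.exp_nat_mul, mul_one, Real.exp_le_exp]
        push_cast
        have hsq : (256 : ℝ) ≤ d ^ 2 := by nlinarith
        nlinarith

lemma mul_exp_le_card_lt_inner_signVec (hd : 3 ≤ d) {a R : ℝ} (ha1 : a < 1)
    (ha : d * a ^ 4 / 3 ≤ Real.log d) {p θ : E d} (hp : ∀ i, |p i| ≤ a)
    (hpR : ‖p‖ ^ 2 < R - 20 * Real.log d) (hθ : θ ≠ 0) :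
    (d : ℝ) ^ 4 / 8 * Real.exp (-R / 2) * 2 ^ d ≤
      Finset.card {σ : Fin d → Bool | ⟪p, θ⟫_ℝ < ⟪signVec σ, θ⟫_ℝ} := by
  have hd0 : (0 : ℝ) < d := by positivity
  have hfourth : ∑ i, p i ^ 4 ≤ d * a ^ 4 := by
    calc ∑ i, p i ^ 4 ≤ ∑ _i : Fin d, a ^ 4 := Finset.sum_le_sum fun i _ => by
          rw [← Even.pow_abs (by decide)]
          exact pow_le_pow_left₀ (abs_nonneg _) (hp i) 4
      _ = d * a ^ 4 := by rw [Finset.sum_const, Finset.card_fin, nsmul_eq_mul]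
  have hexp : (d : ℝ) ^ 9 * Real.exp (-R / 2) ≤
      Real.exp (-(‖p‖ ^ 2 / 2 + (∑ i, p i ^ 4) / 3)) := by
    rw [← Real.exp_log (pow_pos hd0 9), ← Real.exp_add, Real.exp_le_exp, Real.log_pow]
    push_cast
    linarith
  have hmass := two_pow_mul_exp_le_card_lt_inner_signVec hd (fun i => (hp i).trans_lt ha1) hθ
  refine le_of_mul_le_mul_left ?_ (show 0 < 8 * (d : ℝ) ^ 5 by positivity)
  calc 8 * (d : ℝ) ^ 5 * (d ^ 4 / 8 * Real.exp (-R / 2) * 2 ^ d)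
      = 2 ^ d * (d ^ 9 * Real.exp (-R / 2)) := by ring
    _ ≤ 2 ^ d * Real.exp (-(‖p‖ ^ 2 / 2 + (∑ i, p i ^ 4) / 3)) := by gcongr
    _ ≤ _ := hmass

lemma exists_finset_signVec_hitting {κ : Type*} (hd : 16 ≤ d) {a R : ℝ} (ha1 : a < 1)
    (ha : d * a ^ 4 / 3 ≤ Real.log d) (hR : Real.exp (-R / 2) ≤ 1 / 4) {Y : Finset κ}
    {y : κ → E d} (hy : ∀ z ∈ Y, ‖y z‖ ^ 2 = R) :
    ∃ A : Finset (Fin d → Bool),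
      (∀ p : E d, (∀ i, |p i| ≤ a) → ‖p‖ ^ 2 < R - 20 * Real.log d →
        ∀ θ ≠ 0, ∃ σ ∈ A, ⟪p, θ⟫_ℝ < ⟪signVec σ, θ⟫_ℝ) ∧
      ∃ Y' ⊆ Y, Y.card ≤ 2 * Y'.card ∧
        ∀ z ∈ Y', ∀ σ ∈ A, ⟪signVec σ, y z⟫_ℝ < ‖y z‖ ^ 2 := by
  classical
  have hcube : (Fintype.card (Fin d → Bool) : ℝ) = 2 ^ d := by simp
  let large : Finset (Finset (Fin d → Bool)) :=
    (halfspaceTraces fun σ : Fin d → Bool => signVec σ).filter fun H =>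
      (d : ℝ) ^ 4 / 8 * Real.exp (-R / 2) * Fintype.card (Fin d → Bool) ≤ H.card
  have hcard : 4 * (large.card : ℝ) ≤ Real.exp ((d : ℝ) ^ 4 / 8 / 8) := by
    have hVC : large.card ≤ (d + 2) * (2 ^ d) ^ (d + 1) := by
      refine (Finset.card_filter_le _ _).trans ((card_halfspaceTraces_le _).trans_eq ?_)
      simp
    calc 4 * (large.card : ℝ) ≤ 4 * ((d + 2) * (2 ^ d) ^ (d + 1)) := by gcongr; exact_mod_cast hVC
      _ ≤ Real.exp ((d : ℝ) ^ 4 / 64) := four_mul_add_two_mul_two_pow_le_exp hd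
      _ = Real.exp ((d : ℝ) ^ 4 / 8 / 8) := by ring_nf
  obtain ⟨A, hA, Y', hY', hcardY', hdisj⟩ := exists_finset_hitting (Y := Y)
    (C := fun z => {σ | ‖y z‖ ^ 2 ≤ ⟪signVec σ, y z⟫_ℝ}) (Real.exp_pos (-R / 2)) hR
    (by positivity) (fun z hz => by
      simpa only [hy z hz, hcube, Fintype.card_fin] using card_norm_sq_le_inner_signVec_le (y z))
    (fun H hH => (Finset.mem_filter.1 hH).2) hcard
  refine ⟨A, fun p hp hpR θ hθ => ?_, Y', hY', hcardY', fun z hz σ hσ => ?_⟩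
  · obtain ⟨σ, hσ, hmem⟩ := hA {σ | ⟪p, θ⟫_ℝ < ⟪signVec σ, θ⟫_ℝ}
      (Finset.mem_filter.2
        ⟨mem_halfspaceTraces.2 ⟨innerₗ (E d) θ, ⟪p, θ⟫_ℝ, by simp [real_inner_comm]⟩, by
          simpa only [hcube] using mul_exp_le_card_lt_inner_signVec (by lia) ha1 ha hp hpR hθ⟩)
    exact ⟨σ, hσ, (Finset.mem_filter.1 hmem).2⟩
  · by_contra! hle
    exact Finset.disjoint_left.1 (hdisj z hz) hσ (by simpa using hle)

end Sampling

section Counting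

variable {d : ℕ}

-- `20 log d` is the drop of `‖·‖²` at which halfspaces start to contain a point of the sample.
lemma card_le_two_mul_mul_maxFacets01 {κ : Type*} (hd : 16 ≤ d) {a R : ℝ} (ha0 : 0 ≤ a)
    (ha1 : a < 1) (ha : d * a ^ 4 / 3 ≤ Real.log d) (hR : 20 * Real.log d < R) {Y : Finset κ}
    {y : κ → E d} (hya : ∀ z ∈ Y, ∀ i, |y z i| ≤ a) (hyR : ∀ z ∈ Y, ‖y z‖ ^ 2 = R) {N : ℕ}
    (hN : ∀ (c : E d) (X : Finset κ), X ⊆ Y → (∀ z ∈ X, ‖y z - c‖ ^ 2 ≤ 20 * Real.log d) →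
      X.card ≤ N) :
    Y.card ≤ 2 * (N * maxFacets01 d) := by
  have : NeZero d := ⟨by lia⟩
  have hexp : Real.exp (-R / 2) ≤ 1 / 4 := by
    have hlog : 1 ≤ Real.log d := by
      rw [Real.le_log_iff_exp_le (by positivity)]
      have : (16 : ℝ) ≤ d := mod_cast hd
      linarith [Real.exp_one_lt_d9]
    rw [neg_div, Real.exp_neg, inv_le_comm₀ (Real.exp_pos _) (by norm_num)]
    linarith [Real.add_one_le_exp (R / 2)]
  obtain ⟨A, hA, Y', hY', hcard, hout⟩ := exists_finset_signVec_hitting hd ha1 ha hexp hyR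
  have hρ : 0 < R - 20 * Real.log d := sub_pos.2 hR
  have hbox : {p : E d | ∀ i, |p i| ≤ a} = WithLp.ofLp ⁻¹' Set.Icc (fun _ => -a) fun _ => a := by
    ext p
    simp only [Set.mem_ofPred_eq, abs_le, Set.mem_preimage, Set.mem_Icc, Pi.le_def, forall_and]
  have hclosed : IsClosed {p : E d | ∀ i, |p i| ≤ a} :=
    hbox ▸ isClosed_Icc.preimage (PiLp.continuous_ofLp 2 _)
  have hconvex : Convex ℝ {p : E d | ∀ i, |p i| ≤ a} :=
    hbox ▸ (convex_Icc _ _).linear_preimage (WithLp.linearEquiv 2 ℝ (Fin d → ℝ)).toLinearMap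
  have hinterior (p : E d) (hp : ∀ i, |p i| ≤ a) (hpρ : ‖p‖ ^ 2 < R - 20 * Real.log d) :
      cubeMap d p ∈ interior (convexHull ℝ (cubeVertices A)) :=
    cubeMap_mem_interior_convexHull_cubeVertices (hA p hp hpρ)
  have hfacets := card_le_mul_ncard_facets
    ((finite_cube01 d).subset (cubeVertices_subset_cube01 A)) (cubeMap d) hclosed hconvex
    (fun _ => by simpa using ha0) hρ hinterior (fun z hz => hya z (hY' hz))
    (fun z hz => hyR z (hY' hz)) (fun z hz => cubeMap_notMem_convexHull_cubeVertices (hout z hz))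
    fun c X hX hXc => hN c X (hX.trans hY') fun z hz => (hXc z hz).trans_eq (sub_sub_cancel _ _)
  calc Y.card ≤ 2 * Y'.card := hcard
    _ ≤ 2 * (N * (facets (convexHull ℝ (cubeVertices A))).ncard) := by gcongr
    _ ≤ 2 * (N * maxFacets01 d) := by
        gcongr
        exact ncard_facets_convexHull_le_maxFacets01 (cubeVertices_subset_cube01 A)
          ⟨_, hinterior 0 (fun _ => by simpa using ha0) (by simpa using hρ)⟩

lemma exists_finset_sum_sq_eq (ι : Type*) [Fintype ι] (M : ℕ) :
    ∃ (T : ℤ) (Y : Finset (ι → ℤ)),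
      (∀ z ∈ Y, ∀ i, z i ∈ Set.Icc (M : ℤ) (2 * M)) ∧ (∀ z ∈ Y, ∑ i, z i ^ 2 = T) ∧
      M ^ Fintype.card ι ≤ Y.card * (4 * Fintype.card ι * M ^ 2 + 1) := by
  classical
  let grid : Finset (ι → ℤ) := Fintype.piFinset fun _ => Finset.Ico (M : ℤ) (2 * M)
  let norms : Finset ℤ := Finset.Icc 0 (4 * Fintype.card ι * M ^ 2)
  have hgrid : ∀ z ∈ grid, ∀ i, z i ∈ Set.Icc (M : ℤ) (2 * M) := fun z hz i =>
    Set.Ico_subset_Icc_self (Finset.mem_Ico.1 (Fintype.mem_piFinset.1 hz i))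
  have hmaps : ∀ z ∈ grid, ∑ i, z i ^ 2 ∈ norms := fun z hz => by
    refine Finset.mem_Icc.2 ⟨Finset.sum_nonneg fun i _ => sq_nonneg _, ?_⟩
    calc ∑ i, z i ^ 2 ≤ ∑ _i : ι, (2 * M : ℤ) ^ 2 := Finset.sum_le_sum fun i _ =>
          pow_le_pow_left₀ ((Nat.cast_nonneg M).trans (hgrid z hz i).1) (hgrid z hz i).2 2
      _ = 4 * Fintype.card ι * M ^ 2 := by
          rw [Finset.sum_const, Finset.card_univ, nsmul_eq_mul]
          ring
  obtain ⟨T, -, hT⟩ := Finset.exists_max_image norms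
    (fun T => (grid.filter fun z => ∑ i, z i ^ 2 = T).card)
    ⟨0, Finset.left_mem_Icc.2 (by positivity)⟩
  refine ⟨T, grid.filter fun z => ∑ i, z i ^ 2 = T,
    fun z hz => hgrid z (Finset.mem_filter.1 hz).1, fun z hz => (Finset.mem_filter.1 hz).2, ?_⟩
  have hgridcard : grid.card = M ^ Fintype.card ι := by
    simp only [grid, Fintype.card_piFinset, Int.card_Ico, Finset.prod_const, Finset.card_univ]
    congr 1
    lia
  have hnormscard : norms.card = 4 * Fintype.card ι * M ^ 2 + 1 := by
    simp only [norms, Int.card_Icc]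
    lia
  rw [← hgridcard, ← hnormscard]
  exact Finset.card_le_mul_card_image_of_maps_to hmaps _ hT

lemma card_le_of_forall_norm_smul_sub_sq_le {ι : Type*} [Fintype ι] {η s : ℝ} (hη : 0 < η)
    (hs : s ≤ η ^ 2 * Fintype.card ι) (c : EuclideanSpace ℝ ι) {Z : Finset (ι → ℤ)}
    (hZ : ∀ z ∈ Z, ‖η • WithLp.toLp 2 (fun i => (z i : ℝ)) - c‖ ^ 2 ≤ s) :
    Z.card ≤ 24 ^ Fintype.card ι := by
  refine card_le_of_forall_sum_sub_sq_le (fun i => c i / η) fun z hz => ?_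
  refine le_of_mul_le_mul_left ?_ (pow_pos hη 2)
  calc η ^ 2 * ∑ i, ((z i : ℝ) - c i / η) ^ 2
      = ‖η • WithLp.toLp 2 (fun i => (z i : ℝ)) - c‖ ^ 2 := by
        rw [EuclideanSpace.real_norm_sq_eq, Finset.mul_sum]
        refine Finset.sum_congr rfl fun i _ => ?_
        simp only [PiLp.sub_apply, PiLp.smul_apply, smul_eq_mul]
        field_simp
    _ ≤ η ^ 2 * Fintype.card ι := (hZ z hz).trans hs

-- At scale `η`, the packing bound applies to balls of squared radius `20 log d`.
lemma pow_le_mul_maxFacets01_of_scale {M : ℕ} (hd : 16 ≤ d) (hM : 2 ≤ M) {η : ℝ} (hη : 0 < η)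
    (hηd : 20 * Real.log d = η ^ 2 * d) (h1 : 2 * M * η < 1)
    (h4 : d * (2 * M * η) ^ 4 / 3 ≤ Real.log d) :
    M ^ d ≤ 2 * (24 ^ d * maxFacets01 d) * (4 * d * M ^ 2 + 1) := by
  obtain ⟨T, Y, hYM, hYT, hcard⟩ := exists_finset_sum_sq_eq (Fin d) M
  rw [Fintype.card_fin] at hcard
  have hd0 : (0 : ℝ) < d := by positivity
  have hYM' (z) (hz : z ∈ Y) (i) : (M : ℝ) ≤ z i ∧ (z i : ℝ) ≤ 2 * M :=
    mod_cast Set.mem_Icc.1 (hYM z hz i)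
  rcases Y.eq_empty_or_nonempty with rfl | ⟨z₀, hz₀⟩
  · exact hcard.trans (by simp)
  have hR : 20 * Real.log d < η ^ 2 * T := by
    have hT : (d * M ^ 2 : ℝ) ≤ T := by
      calc (d * M ^ 2 : ℝ) = ∑ _i : Fin d, (M : ℝ) ^ 2 := by
            rw [Finset.sum_const, Finset.card_fin, nsmul_eq_mul]
        _ ≤ ∑ i, (z₀ i : ℝ) ^ 2 := Finset.sum_le_sum fun i _ =>
            pow_le_pow_left₀ (Nat.cast_nonneg M) (hYM' z₀ hz₀ i).1 2
        _ = T := mod_cast hYT z₀ hz₀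
    have hM' : (2 : ℝ) ≤ M := mod_cast hM
    rw [hηd]
    exact mul_lt_mul_of_pos_left ((lt_mul_of_one_lt_right hd0 (by nlinarith)).trans_le hT)
      (pow_pos hη 2)
  refine hcard.trans (Nat.mul_le_mul_right _ ?_)
  refine card_le_two_mul_mul_maxFacets01 hd (by positivity) h1 h4 hR
    (y := fun z => η • WithLp.toLp 2 fun i => (z i : ℝ)) (fun z hz i => ?_) (fun z hz => ?_)
    fun c X _ hX => ?_
  · obtain ⟨hlo, hhi⟩ := hYM' z hz i
    simp only [PiLp.smul_apply, smul_eq_mul, abs_mul, abs_of_pos hη,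
      abs_of_nonneg ((Nat.cast_nonneg M).trans hlo)]
    linarith [mul_le_mul_of_nonneg_left hhi hη.le]
  · have hsum : ∑ i, (z i : ℝ) ^ 2 = T := mod_cast hYT z hz
    rw [norm_smul, mul_pow, Real.norm_eq_abs, sq_abs, EuclideanSpace.real_norm_sq_eq, hsum]
  · simpa only [Fintype.card_fin] using
      card_le_of_forall_norm_smul_sub_sq_le hη (by rw [hηd, Fintype.card_fin]) c hX

lemma half_lt_log (hd : 2 ≤ d) : 1 / 2 < Real.log d := by
  have : Real.log 2 ≤ Real.log d := Real.log_le_log two_pos (mod_cast hd)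
  linarith [Real.log_two_gt_d9]

lemma pow_le_mul_maxFacets01 {M : ℕ} (hd : 2 ≤ d) (hM : 2 ≤ M)
    (hMd : (8 * M) ^ 4 * Real.log d ≤ d) :
    M ^ d ≤ 2 * (24 ^ d * maxFacets01 d) * (4 * d * M ^ 2 + 1) := by
  have hd0 : (0 : ℝ) < d := by positivity
  have hlog := half_lt_log hd
  have : 0 < Real.log d := one_half_pos.trans hlog
  have hlogd : 65536 * Real.log d ≤ d := by
    have : (2 : ℝ) ^ 4 ≤ M ^ 4 := pow_le_pow_left₀ two_pos.le (mod_cast hM) 4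
    nlinarith
  have hd16 : 16 ≤ d := by
    have : (16 : ℝ) ≤ d := by linarith
    exact_mod_cast this
  set η := Real.sqrt (20 * Real.log d / d)
  have hη : 0 < η := Real.sqrt_pos.2 (by positivity)
  have hη2 : η ^ 2 = 20 * Real.log d / d := Real.sq_sqrt (by positivity)
  have hfourth : d * (2 * M * η) ^ 4 ≤ 2 * Real.log d := by
    have hη4 : d * (2 * M * η) ^ 4 =
        (8 * M) ^ 4 * Real.log d / d * (25 / 16 * Real.log d) := by
      rw [mul_pow, show η ^ 4 = (η ^ 2) ^ 2 by ring, hη2]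
      field_simp
      ring
    rw [hη4]
    exact (mul_le_of_le_one_left (by positivity) (div_le_one_of_le₀ hMd hd0.le)).trans (by linarith)
  refine pow_le_mul_maxFacets01_of_scale hd16 hM hη (by rw [hη2, div_mul_cancel₀ _ hd0.ne']) ?_
    (by linarith)
  refine (pow_lt_one_iff_of_nonneg (by positivity) four_ne_zero).1 ?_
  by_contra! hge
  linarith [le_mul_of_one_le_right hd0.le hge]

lemma div_pow_le_maxFacets01 {M : ℕ} (hd : 2 ≤ d) (hM : 2 ≤ M)
    (hMd : (8 * M) ^ 4 * Real.log d ≤ d) : ((M : ℝ) / 768) ^ d ≤ maxFacets01 d := by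
  have hMsq : M ^ 2 ≤ d := by
    have hM1 : (1 : ℝ) ≤ M := mod_cast one_le_two.trans hM
    have : (M : ℝ) ^ 2 ≤ d := by
      calc (M : ℝ) ^ 2 ≤ M ^ 4 := pow_le_pow_right₀ hM1 (by norm_num)
        _ ≤ (8 * M) ^ 4 * Real.log d := by
            nlinarith [half_lt_log hd, pow_pos (one_pos.trans_le hM1) 4]
        _ ≤ d := hMd
    exact_mod_cast this
  have hpoly : 2 * (4 * d * M ^ 2 + 1) ≤ 32 ^ d := by
    have hlt : d + 1 ≤ 2 ^ d := Nat.lt_two_pow_self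
    calc 2 * (4 * d * M ^ 2 + 1) ≤ 2 * (4 * d * d + 1) := by gcongr
      _ ≤ 8 * ((d + 1) * (d + 1)) := by nlinarith
      _ ≤ 8 ^ d * (2 ^ d * 2 ^ d) := by
          gcongr
          exact Nat.le_self_pow (by lia) 8
      _ = 32 ^ d := by
          rw [← mul_pow, ← mul_pow]
          norm_num
  rw [div_pow, div_le_iff₀ (by positivity)]
  have hmain : M ^ d ≤ maxFacets01 d * 768 ^ d := by
    calc M ^ d ≤ 2 * (24 ^ d * maxFacets01 d) * (4 * d * M ^ 2 + 1) :=
          pow_le_mul_maxFacets01 hd hM hMd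
      _ = maxFacets01 d * (24 ^ d * (2 * (4 * d * M ^ 2 + 1))) := by ring
      _ ≤ maxFacets01 d * (24 ^ d * 32 ^ d) := by gcongr
      _ = maxFacets01 d * 768 ^ d := by
          rw [← mul_pow]
          norm_num
  exact_mod_cast hmain

end Counting

/-- Theorem 5.1 (Bárány–Pór): there is `c > 0` such that for all `d ≥ 2`,
`G(d) ≥ (c d / log d)^{d/4}`. -/
theorem maxFacets01_lower_bound :
    ∃ c : ℝ, 0 < c ∧ ∀ d : ℕ, 2 ≤ d →
      (c * d / Real.log d) ^ ((d : ℝ) / 4) ≤ (maxFacets01 d : ℝ) := by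
  refine ⟨(1 / 12288) ^ 4, by positivity, fun d hd => ?_⟩
  have : NeZero d := ⟨by lia⟩
  have hlog : 0 < Real.log d := Real.log_pos (mod_cast hd)
  obtain ⟨u, hu, hu4⟩ : ∃ u : ℝ, 0 ≤ u ∧ u ^ 4 = (1 / 12288) ^ 4 * d / Real.log d :=
    ⟨_, Real.rpow_nonneg (by positivity) _, Real.rpow_inv_natCast_pow (by positivity) four_ne_zero⟩
  rw [← hu4, ← Real.rpow_natCast_mul hu, Nat.cast_ofNat, mul_div_cancel₀ _ four_ne_zero,
    Real.rpow_natCast]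
  rcases lt_or_ge (1536 * u) 2 with hsmall | hlarge
  · exact (pow_le_one₀ hu (by linarith)).trans (mod_cast one_le_maxFacets01)
  have hfloor : ⌊1536 * u⌋₊ ≤ 1536 * u := Nat.floor_le (by positivity)
  have hM : 2 ≤ ⌊1536 * u⌋₊ := Nat.le_floor hlarge
  have hMd : (8 * (⌊1536 * u⌋₊ : ℝ)) ^ 4 * Real.log d ≤ (d : ℝ) := by
    calc (8 * (⌊1536 * u⌋₊ : ℝ)) ^ 4 * Real.log d ≤ (8 * (1536 * u)) ^ 4 * Real.log d := by gcongr
      _ = (d : ℝ) := by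
          rw [← mul_assoc, mul_pow, hu4]
          field_simp
          norm_num
  refine le_trans (pow_le_pow_left₀ hu ?_ d) (div_pow_le_maxFacets01 hd hM hMd)
  have : (2 : ℝ) ≤ ⌊1536 * u⌋₊ := mod_cast hM
  linarith [Nat.lt_floor_add_one (1536 * u)]
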